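/- arXiv:1502.02070 — 7 statements merged into one kernel-verified Lean document; each statement's English description precedes it below -/
import Mathlib

section
/- For every prime power q, there exists a finite set P of points in EuclideanSpace ℝ (Fin (q^3 - q^2 + q)) with pairwise distances at least 1, such that the unit-distance graph on P (joining two points exactly when their distance equals 1) is strongly regular with parameters ((q+1)(q^3+1), q^4, q(q-1)(q^2+1), (q-1)q^3) and has chromatic number exactly q^3 + 1. -/
open scoped Classical

/-- The unit-distance graph on a set of points in Euclidean space:
two points are adjacent exactly when their distance equals `1`. -/
def unitDistanceGraph {d : ℕ} (P : Set (EuclideanSpace ℝ (Fin d))) :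
    SimpleGraph P where
  Adj x y := dist (x : EuclideanSpace ℝ (Fin d)) (y : EuclideanSpace ℝ (Fin d)) = 1
  symm := by
    constructor
    intro x y h
    rwa [dist_comm]
  loopless := by
    constructor
    intro x h
    rw [dist_self] at h
    norm_num at h


namespace HermSpread

open Finset

set_option linter.unusedSectionVars false
set_option linter.unusedVariables false

section Field

variable {K : Type} [Field K] [Fintype K] (σ : K →+* K) (q : ℕ)

lemma card_roots_le (p : Polynomial K) (hp : p ≠ 0) (n : ℕ) (hn : p.natDegree ≤ n)
    (S : Finset K) (hS : ∀ x ∈ S, p.eval x = 0) : S.card ≤ n := by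
  have h : S ⊆ p.roots.toFinset := by
    intro x hx
    rw [Multiset.mem_toFinset, Polynomial.mem_roots hp]
    exact hS x hx
  calc S.card ≤ p.roots.toFinset.card := card_le_card h
    _ ≤ Multiset.card p.roots := Multiset.toFinset_card_le _
    _ ≤ p.natDegree := Polynomial.card_roots' p
    _ ≤ n := hn

open Polynomial in
lemma card_lin_le (hq : 2 ≤ q) (hσ : ∀ x, σ x = x ^ q) (a s : K) (S : Finset K)
    (hS : ∀ x ∈ S, σ x + a * x = s) : S.card ≤ q := by
  have hd : (X ^ q + (C a * X - C s) : K[X]).natDegree = q := by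
    compute_degree!
    · rw [if_neg (by omega)]; simp [show q ≠ 0 by omega]
    all_goals omega
  refine card_roots_le (X ^ q + (C a * X - C s)) ?_ q hd.le S ?_
  · intro h0
    rw [h0] at hd
    simp at hd
    omega
  · intro x hx
    have := hS x hx
    rw [hσ] at this
    simp only [eval_add, eval_pow, eval_X, eval_sub, eval_mul, eval_C]
    linear_combination this

lemma card_trace (hq : 2 ≤ q) (hσ : ∀ x, σ x = x ^ q) (hσ2 : ∀ x, σ (σ x) = x)
    (hK : Fintype.card K = q ^ 2) (s : K) (hs : σ s = s) :
    (univ.filter fun x : K => x + σ x = s).card = q := by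
  have hle : ∀ s : K, (univ.filter fun x : K => x + σ x = s).card ≤ q := by
    intro s
    refine card_lin_le σ q hq hσ 1 s _ ?_
    intro x hx
    have := (mem_filter.1 hx).2
    linear_combination this
  refine le_antisymm (hle s) ?_
  by_contra hlt
  push Not at hlt
  set F := univ.filter fun x : K => σ x = x with hF
  have hFc : F.card ≤ q := by
    refine card_lin_le σ q hq hσ (-1) 0 _ ?_
    intro x hx
    have := (mem_filter.1 hx).2
    linear_combination this
  have hsum : (univ : Finset K).card = ∑ b ∈ F, (univ.filter fun x : K => x + σ x = b).card := by
    refine card_eq_sum_card_fiberwise ?_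
    intro x _
    simp only [hF, coe_filter, mem_univ, true_and, Set.mem_ofPred_eq, map_add, hσ2]
    ring
  have hlt2 : ∑ b ∈ F, (univ.filter fun x : K => x + σ x = b).card < ∑ b ∈ F, q := by
    refine sum_lt_sum (fun i _ => hle i) ⟨s, ?_, hlt⟩
    simp [hF, hs]
  rw [← hsum, card_univ, hK, sum_const, smul_eq_mul] at hlt2
  nlinarith

lemma card_anti (hq : 2 ≤ q) (hσ : ∀ x, σ x = x ^ q) (hσ2 : ∀ x, σ (σ x) = x)
    (hK : Fintype.card K = q ^ 2) :
    (univ.filter fun x : K => σ x = -x).card = q := by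
  rw [← card_trace σ q hq hσ hσ2 hK 0 (by simp)]
  congr 1
  ext x
  simp only [mem_filter, mem_univ, true_and]
  constructor <;> intro h <;> linear_combination h

open Polynomial in
lemma card_U (hq : 2 ≤ q) (hσ : ∀ x, σ x = x ^ q) (hσ2 : ∀ x, σ (σ x) = x)
    (hK : Fintype.card K = q ^ 2) :
    (univ.filter fun u : K => u * σ u = 1).card = q + 1 := by
  set U := univ.filter fun u : K => u * σ u = 1 with hU
  refine le_antisymm ?_ ?_
  · refine card_roots_le (X ^ (q+1) - C 1) (X_pow_sub_C_ne_zero (by omega) 1) (q+1)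
      (by rw [natDegree_X_pow_sub_C]) _ ?_
    intro x hx
    have := (mem_filter.1 hx).2
    rw [hσ] at this
    simp only [eval_sub, eval_pow, eval_X, eval_C]
    linear_combination this
  · have hsum : (univ.filter fun x : K => x ≠ 0).card
        = ∑ b ∈ U, ((univ.filter fun x : K => x ≠ 0).filter fun x : K => x / σ x = b).card := by
      refine card_eq_sum_card_fiberwise ?_
      intro x hx
      have hx0 : x ≠ 0 := by simpa using hx
      have hx1 : σ x ≠ 0 := by simpa using hx0
      simp only [hU, coe_filter, mem_univ, true_and, Set.mem_ofPred_eq, map_div₀, hσ2]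
      field_simp
    have hle : ∀ b ∈ U, ((univ.filter fun x : K => x ≠ 0).filter fun x : K => x / σ x = b).card
        ≤ q - 1 := by
      intro b hb
      have hb0 : b ≠ 0 := by
        rintro rfl
        simp [hU] at hb
      refine card_roots_le (X ^ (q-1) - C b⁻¹) (X_pow_sub_C_ne_zero (by omega) _) (q-1)
        (by rw [natDegree_X_pow_sub_C]) _ ?_
      intro x hx
      simp only [mem_filter, mem_univ, true_and] at hx
      obtain ⟨hx0, h⟩ := hx
      rw [hσ] at h
      have e : x ^ q = x ^ (q-1) * x := by rw [← pow_succ]; congr 1; omega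
      rw [e] at h
      simp only [eval_sub, eval_pow, eval_X, eval_C]
      rw [← h]
      field_simp
      ring
    have h1 : (univ.filter fun x : K => x ≠ 0).card = q ^ 2 - 1 := by
      rw [filter_ne', card_erase_of_mem (mem_univ _), card_univ, hK]
    have h2 := sum_le_sum hle
    rw [← hsum, h1, sum_const, smul_eq_mul] at h2
    obtain ⟨r, rfl⟩ : ∃ r, q = r + 2 := ⟨q - 2, by omega⟩
    have e1 : (r + 2) ^ 2 - 1 = (r + 3) * (r + 1) := by
      have : (r + 2) ^ 2 = (r + 3) * (r + 1) + 1 := by ring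
      omega
    rw [e1] at h2
    have := Nat.le_of_mul_le_mul_right h2 (by omega)
    omega

end Field

section Geometry

variable {K : Type} [Field K] (σ : K →+* K)

/-- The Hermitian form on `K^3`. -/
def H (x y : K × K × K) : K := x.1 * σ y.2.2 + x.2.1 * σ y.2.1 + x.2.2 * σ y.1

/-- Points of the Hermitian curve. -/
abbrev Pt : Type := Option {p : K × K // p.2 + σ p.2 + p.1 * σ p.1 = 0}

/-- Representative vector of a point. -/
def rep : Pt σ → K × K × K
  | none => (0, 0, 1)
  | some p => (1, p.1.1, p.1.2)

/-- A vector orthogonal to `x` and `y`. -/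
def crs (x y : K × K × K) : K × K × K :=
  (σ (x.1 * y.2.1 - x.2.1 * y.1), σ (x.2.2 * y.1 - x.1 * y.2.2),
    σ (x.2.1 * y.2.2 - x.2.2 * y.2.1))

lemma H_symm (hσ2 : ∀ x, σ (σ x) = x) (x y : K × K × K) : H σ y x = σ (H σ x y) := by
  simp only [H, map_add, map_mul, hσ2]
  ring

lemma H_rep_self (P : Pt σ) : H σ (rep σ P) (rep σ P) = 0 := by
  rcases P with _ | ⟨⟨a, b⟩, h⟩
  · simp [H, rep]
  · simp only [H, rep, map_one] at h ⊢
    linear_combination h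

lemma H_rep_ne (hσ2 : ∀ x, σ (σ x) = x) (P Q : Pt σ) (hPQ : P ≠ Q) :
    H σ (rep σ P) (rep σ Q) ≠ 0 := by
  rcases P with _ | ⟨⟨a, b⟩, h⟩ <;> rcases Q with _ | ⟨⟨c, d⟩, h'⟩
  · exact absurd rfl hPQ
  · simp [H, rep]
  · simp [H, rep]
  · intro h0
    apply hPQ
    simp only [H, rep, map_one] at h h' h0
    have h1 := congrArg σ h0
    simp only [map_add, map_mul, hσ2, map_one, map_zero] at h1
    have h2 : (a - c) * σ (a - c) = 0 := by
      rw [map_sub]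
      linear_combination h + h' - h0 - h1
    have h3 : a = c := by
      rcases mul_eq_zero.1 h2 with h | h
      · exact sub_eq_zero.1 h
      · rw [map_eq_zero] at h; exact sub_eq_zero.1 h
    subst h3
    have h4 : σ (b - d) = 0 := by
      rw [map_sub]
      linear_combination h - h0
    rw [map_eq_zero] at h4
    have h5 := sub_eq_zero.1 h4
    subst h5
    rfl

lemma exists_rep (x : K × K × K) (hx : x ≠ 0) (hxx : H σ x x = 0) :
    ∃ (R : Pt σ) (c : K), c ≠ 0 ∧ x = c • rep σ R := by
  obtain ⟨a, b, d⟩ := x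
  by_cases ha : a = 0
  · subst ha
    simp only [H, map_zero, zero_mul, mul_zero, zero_add, add_zero, mul_eq_zero, map_eq_zero,
      or_self] at hxx
    subst hxx
    refine ⟨none, d, ?_, ?_⟩
    · rintro rfl; exact hx rfl
    · simp [rep]
  · have ha' : σ a ≠ 0 := by simpa using ha
    refine ⟨some ⟨(b / a, d / a), ?_⟩, a, ha, ?_⟩
    · simp only [H] at hxx
      simp only [map_div₀]
      field_simp
      linear_combination hxx
    · simp only [rep, Prod.smul_mk, smul_eq_mul, mul_one]
      congr 2 <;> field_simp

lemma rep_inj (P Q : Pt σ) (c : K) (h : rep σ P = c • rep σ Q) : P = Q := by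
  rcases P with _ | ⟨⟨a, b⟩, hP⟩ <;> rcases Q with _ | ⟨⟨a', b'⟩, hQ⟩
  · rfl
  · simp only [rep, Prod.smul_mk, smul_eq_mul, mul_one, Prod.mk.injEq] at h
    obtain ⟨rfl, h1, h2⟩ := h
    simp at h2
  · simp [rep] at h
  · simp only [rep, Prod.smul_mk, smul_eq_mul, mul_one, Prod.mk.injEq] at h
    obtain ⟨rfl, h1, h2⟩ := h
    simp only [one_mul] at h1 h2
    subst h1 h2
    rfl

lemma decomp (hσ2 : ∀ x, σ (σ x) = x) (x y z : K × K × K) (hx : H σ x x = 0) (hy : H σ y y = 0) :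
    (H σ x y * H σ y x) • z = (H σ z y * H σ y x) • x + (H σ z x * H σ x y) • y
      + (H σ z (crs σ x y)) • crs σ x y := by
  have key : (H σ x y * H σ y x - H σ x x * H σ y y) • z =
      (H σ z y * H σ y x - H σ z x * H σ y y) • x + (H σ z x * H σ x y - H σ z y * H σ x x) • y
      + (H σ z (crs σ x y)) • crs σ x y := by
    obtain ⟨x1, x2, x3⟩ := x
    obtain ⟨y1, y2, y3⟩ := y
    obtain ⟨z1, z2, z3⟩ := z
    simp only [H, crs, map_sub, map_mul, hσ2, Prod.smul_mk, smul_eq_mul, Prod.mk_add_mk,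
      Prod.mk.injEq]
    refine ⟨?_, ?_, ?_⟩ <;> ring
  rw [hx, hy] at key
  simpa using key

lemma H_crs_left (hσ2 : ∀ x, σ (σ x) = x) (x y : K × K × K) : H σ x (crs σ x y) = 0 := by
  simp only [H, crs, map_sub, map_mul, hσ2]; ring

lemma H_crs_right (hσ2 : ∀ x, σ (σ x) = x) (x y : K × K × K) : H σ y (crs σ x y) = 0 := by
  simp only [H, crs, map_sub, map_mul, hσ2]; ring

lemma H_crs_self (hσ2 : ∀ x, σ (σ x) = x) (x y : K × K × K) (hx : H σ x x = 0)
    (hy : H σ y y = 0) : H σ (crs σ x y) (crs σ x y) = H σ x y * H σ y x := by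
  have key : H σ (crs σ x y) (crs σ x y) = H σ x y * H σ y x - H σ x x * H σ y y := by
    simp only [H, crs, map_sub, map_mul, hσ2]; ring
  rw [key, hx]; ring

lemma H_add_left (x y z : K × K × K) : H σ (x + y) z = H σ x z + H σ y z := by
  simp [H]; ring

lemma H_smul_left (c : K) (x z : K × K × K) : H σ (c • x) z = c * H σ x z := by
  simp [H]; ring

lemma H_add_right (x y z : K × K × K) : H σ z (x + y) = H σ z x + H σ z y := by
  simp [H]; ring

lemma H_smul_right (c : K) (x z : K × K × K) : H σ z (c • x) = σ c * H σ z x := by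
  simp [H]; ring

end Geometry

section Count

variable {K : Type} [Field K] [Fintype K] (σ : K →+* K)

/-- The vector with coordinates `(t, γ)`. -/
def vec (x y : K × K × K) (t γ : K) : K × K × K :=
  (t / H σ x y) • x + y + γ • crs σ x y

/-- The scale invariant quantity. -/
def gg (P Q R : Pt σ) : K := H σ (rep σ P) (rep σ R) * H σ (rep σ R) (rep σ Q)

lemma vec_props (hσ2 : ∀ x, σ (σ x) = x) (x y : K × K × K) (hx : H σ x x = 0)
    (hy : H σ y y = 0) (h0 : H σ x y ≠ 0) (t γ : K) :
    H σ (vec σ x y t γ) y = t ∧ H σ (vec σ x y t γ) x = H σ y x ∧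
    H σ (vec σ x y t γ) (crs σ x y) = γ * (H σ x y * H σ y x) ∧
    H σ (vec σ x y t γ) (vec σ x y t γ) = t + σ t + γ * σ γ * (H σ x y * H σ y x) := by
  have e1 : H σ (crs σ x y) x = 0 := by
    rw [H_symm σ hσ2, H_crs_left σ hσ2, map_zero]
  have e2 : H σ (crs σ x y) y = 0 := by
    rw [H_symm σ hσ2, H_crs_right σ hσ2, map_zero]
  have h1 : H σ (vec σ x y t γ) y = t := by
    simp only [vec, H_add_left, H_smul_left, hy, e2]
    field_simp; ring
  have h2 : H σ (vec σ x y t γ) x = H σ y x := by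
    simp only [vec, H_add_left, H_smul_left, hx, e1]
    ring
  have h3 : H σ (vec σ x y t γ) (crs σ x y) = γ * (H σ x y * H σ y x) := by
    simp only [vec, H_add_left, H_smul_left, H_crs_left σ hσ2, H_crs_right σ hσ2,
      H_crs_self σ hσ2 x y hx hy]
    ring
  refine ⟨h1, h2, h3, ?_⟩
  have h4 : H σ (vec σ x y t γ) (vec σ x y t γ) =
      σ (t / H σ x y) * H σ (vec σ x y t γ) x + H σ (vec σ x y t γ) y
        + σ γ * H σ (vec σ x y t γ) (crs σ x y) := by
    conv_lhs => rw [show vec σ x y t γ = (t / H σ x y) • x + y + γ • crs σ x y from rfl]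
    rw [H_add_right, H_add_right, H_smul_right, H_smul_right]
    rfl
  rw [h4, h1, h2, h3, map_div₀, ← H_symm σ hσ2]
  have h5 : H σ y x ≠ 0 := by
    rw [H_symm σ hσ2]; simpa using h0
  field_simp
  ring

lemma rep_eq_vec (hσ2 : ∀ x, σ (σ x) = x) (x y r : K × K × K) (hx : H σ x x = 0)
    (hy : H σ y y = 0) (h0 : H σ x y ≠ 0) (hr : H σ r x ≠ 0) :
    r = (H σ r x / H σ y x) • vec σ x y (H σ r y * H σ y x / H σ r x)
      (H σ r (crs σ x y) / (H σ x y * H σ r x)) := by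
  have h5 : H σ y x ≠ 0 := by
    rw [H_symm σ hσ2]; simpa using h0
  have hd := decomp σ hσ2 x y r hx hy
  have h6 : r = (H σ x y * H σ y x)⁻¹ • ((H σ x y * H σ y x) • r) := by
    rw [smul_smul, inv_mul_cancel₀ (mul_ne_zero h0 h5), one_smul]
  conv_lhs => rw [h6, hd]
  simp only [vec, smul_add, smul_smul]
  congr 1
  · congr 1
    · congr 1; field_simp
    · congr 1; field_simp
  · congr 1; field_simp

lemma card_S_eq (hσ2 : ∀ x, σ (σ x) = x) (P Q : Pt σ) (hPQ : P ≠ Q) (κ : K) :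
    (univ.filter fun R : Pt σ => R ≠ P ∧ R ≠ Q ∧ σ (gg σ P Q R) = κ * gg σ P Q R).card =
    (univ.filter fun p : K × K => p.1 ≠ 0 ∧
      p.1 + σ p.1 + p.2 * σ p.2 * (H σ (rep σ P) (rep σ Q) * H σ (rep σ Q) (rep σ P)) = 0 ∧
      σ p.1 * H σ (rep σ Q) (rep σ P) = κ * (p.1 * H σ (rep σ P) (rep σ Q))).card := by
  have hx := H_rep_self σ P
  have hy := H_rep_self σ Q
  have h0 := H_rep_ne σ hσ2 P Q hPQ
  have h0' := H_rep_ne σ hσ2 Q P hPQ.symm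
  have hsg : ∀ c t : K, c ≠ 0 → (σ (σ c * H σ (rep σ P) (rep σ Q) * (c * t)) =
      κ * (σ c * H σ (rep σ P) (rep σ Q) * (c * t)) ↔
      σ t * H σ (rep σ Q) (rep σ P) = κ * (t * H σ (rep σ P) (rep σ Q))) := by
    intro c t hc
    have hc' : σ c ≠ 0 := by simpa using hc
    rw [H_symm σ hσ2 (rep σ P) (rep σ Q)]
    simp only [map_mul, hσ2]
    constructor
    · intro h
      apply mul_left_cancel₀ (mul_ne_zero hc hc')
      linear_combination h
    · intro h
      linear_combination (c * σ c) * h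
  have hgv : ∀ (R : Pt σ) (c t γ : K), rep σ R = c • vec σ (rep σ P) (rep σ Q) t γ →
      gg σ P Q R = σ c * H σ (rep σ P) (rep σ Q) * (c * t) := by
    intro R c t γ h
    obtain ⟨v1, v2, v3, v4⟩ := vec_props σ hσ2 (rep σ P) (rep σ Q) hx hy h0 t γ
    rw [gg, h, H_smul_left, H_smul_right, v1, H_symm σ hσ2 _ (rep σ P), v2, ← H_symm σ hσ2]
  refine card_bij (fun R _ => (H σ (rep σ R) (rep σ Q) * H σ (rep σ Q) (rep σ P) /
      H σ (rep σ R) (rep σ P), H σ (rep σ R) (crs σ (rep σ P) (rep σ Q)) /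
      (H σ (rep σ P) (rep σ Q) * H σ (rep σ R) (rep σ P)))) ?_ ?_ ?_
  · intro R hR
    simp only [mem_filter, mem_univ, true_and] at hR ⊢
    obtain ⟨hRP, hRQ, hg⟩ := hR
    have hr1 := H_rep_ne σ hσ2 R P hRP
    have hr2 := H_rep_ne σ hσ2 R Q hRQ
    have hrep := rep_eq_vec σ hσ2 (rep σ P) (rep σ Q) (rep σ R) hx hy h0 hr1
    set c := H σ (rep σ R) (rep σ P) / H σ (rep σ Q) (rep σ P) with hcd
    have hc : c ≠ 0 := div_ne_zero hr1 h0'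
    have hc' : σ c ≠ 0 := by simpa using hc
    set t := H σ (rep σ R) (rep σ Q) * H σ (rep σ Q) (rep σ P) / H σ (rep σ R) (rep σ P) with htd
    have ht : t ≠ 0 := div_ne_zero (mul_ne_zero hr2 h0') hr1
    set γ := H σ (rep σ R) (crs σ (rep σ P) (rep σ Q)) /
      (H σ (rep σ P) (rep σ Q) * H σ (rep σ R) (rep σ P)) with hγd
    obtain ⟨v1, v2, v3, v4⟩ := vec_props σ hσ2 (rep σ P) (rep σ Q) hx hy h0 t γ
    refine ⟨ht, ?_, ?_⟩
    · rw [← v4]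
      have h := H_rep_self σ R
      rw [hrep, H_smul_left, H_smul_right] at h
      simpa [hc, hc'] using h
    · rw [hgv R c t γ hrep] at hg
      exact (hsg c t hc).1 hg
  · intro R hR R' hR' heq
    simp only [mem_filter, mem_univ, true_and] at hR hR'
    obtain ⟨hRP, hRQ, hg⟩ := hR
    obtain ⟨hRP', hRQ', hg'⟩ := hR'
    have hr1 := H_rep_ne σ hσ2 R P hRP
    have hr1' := H_rep_ne σ hσ2 R' P hRP'
    have hrep := rep_eq_vec σ hσ2 (rep σ P) (rep σ Q) (rep σ R) hx hy h0 hr1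
    have hrep' := rep_eq_vec σ hσ2 (rep σ P) (rep σ Q) (rep σ R') hx hy h0 hr1'
    simp only [Prod.mk.injEq] at heq
    rw [heq.1, heq.2] at hrep
    generalize vec σ (rep σ P) (rep σ Q) _ _ = v at hrep hrep'
    have hc' : H σ (rep σ R') (rep σ P) / H σ (rep σ Q) (rep σ P) ≠ 0 := div_ne_zero hr1' h0'
    have hv : v = (H σ (rep σ R') (rep σ P) / H σ (rep σ Q) (rep σ P))⁻¹ • rep σ R' :=
      (eq_inv_smul_iff₀ hc').2 hrep'.symm
    rw [hv, smul_smul] at hrep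
    exact rep_inj σ R R' _ hrep
  · rintro ⟨t, γ⟩ hp
    simp only [mem_filter, mem_univ, true_and] at hp
    obtain ⟨ht, hiso, hκ⟩ := hp
    obtain ⟨v1, v2, v3, v4⟩ := vec_props σ hσ2 (rep σ P) (rep σ Q) hx hy h0 t γ
    have hv0 : vec σ (rep σ P) (rep σ Q) t γ ≠ 0 := by
      intro h
      rw [h] at v1
      apply ht
      rw [← v1]
      simp [H]
    obtain ⟨R, c, hc, hR⟩ := exists_rep σ _ hv0 (v4.trans hiso)
    have hR' : rep σ R = c⁻¹ • vec σ (rep σ P) (rep σ Q) t γ := by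
      rw [hR, smul_smul, inv_mul_cancel₀ hc, one_smul]
    refine ⟨R, ?_, ?_⟩
    · simp only [mem_filter, mem_univ, true_and]
      refine ⟨?_, ?_, ?_⟩
      · rintro rfl
        rw [hR, H_smul_left, hx, mul_zero] at v2
        exact h0' v2.symm
      · rintro rfl
        rw [hR, H_smul_left, hy, mul_zero] at v1
        exact ht v1.symm
      · rw [hgv R c⁻¹ t γ hR']
        exact (hsg c⁻¹ t (inv_ne_zero hc)).2 hκ
    · simp only [hR', H_smul_left, v1, v2, v3, Prod.mk.injEq]
      constructor <;> field_simp

lemma card_S_ne (hσ2 : ∀ x, σ (σ x) = x) (q : ℕ) (hK : Fintype.card K = q ^ 2)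
    (P Q : Pt σ) (hPQ : P ≠ Q) (κ : K) (hκ : κ * σ κ = 1)
    (hne : κ * H σ (rep σ P) (rep σ Q) + H σ (rep σ Q) (rep σ P) ≠ 0) :
    (univ.filter fun R : Pt σ => R ≠ P ∧ R ≠ Q ∧ σ (gg σ P Q R) = κ * gg σ P Q R).card
      = q ^ 2 - 1 := by
  rw [card_S_eq σ hσ2 P Q hPQ κ]
  have h0 := H_rep_ne σ hσ2 P Q hPQ
  have h0' := H_rep_ne σ hσ2 Q P hPQ.symm
  have hs := H_symm σ hσ2 (rep σ P) (rep σ Q)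
  have hs' := H_symm σ hσ2 (rep σ Q) (rep σ P)
  generalize H σ (rep σ P) (rep σ Q) = h at *
  generalize H σ (rep σ Q) (rep σ P) = k at *
  have h1 : (univ.filter fun x : K => x ≠ 0).card = q ^ 2 - 1 := by
    rw [filter_ne', card_erase_of_mem (mem_univ _), card_univ, hK]
  rw [← h1]
  have hκ0 : κ ≠ 0 := by rintro rfl; simp at hκ
  have hσκ : σ κ = κ⁻¹ := eq_inv_of_mul_eq_one_right hκ
  have key : ∀ t γ : K, t + σ t + γ * σ γ * (h * k) = 0 → σ t * k = κ * (t * h) →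
      t = - (γ * σ γ * h * k ^ 2) / (κ * h + k) := by
    intro t γ e1 e2
    rw [eq_div_iff hne]
    linear_combination k * e1 - e2
  refine card_bij (fun p _ => p.2) ?_ ?_ ?_
  · rintro ⟨t, γ⟩ hp
    simp only [mem_filter, mem_univ, true_and] at hp ⊢
    rintro rfl
    have := key _ _ hp.2.1 hp.2.2
    simp at this
    exact hp.1 this
  · rintro ⟨t, γ⟩ hp ⟨t', γ'⟩ hp' heq
    simp only [mem_filter, mem_univ, true_and] at hp hp' heq
    subst heq
    rw [key _ _ hp.2.1 hp.2.2, key _ _ hp'.2.1 hp'.2.2]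
  · intro γ hγ
    simp only [mem_filter, mem_univ, true_and] at hγ
    have hγ' : σ γ ≠ 0 := by simpa using hγ
    have e : σ (κ * h + k) = (κ * h + k) / κ := by
      rw [map_add, map_mul, ← hs, ← hs', hσκ]
      field_simp
      ring
    refine ⟨(- (γ * σ γ * h * k ^ 2) / (κ * h + k), γ), ?_, rfl⟩
    simp only [mem_filter, mem_univ, true_and]
    have e3 : σ (- (γ * σ γ * h * k ^ 2) / (κ * h + k)) =
        - (γ * σ γ * k * h ^ 2) * κ / (κ * h + k) := by
      rw [map_div₀, e]
      simp only [map_neg, map_mul, map_pow, hσ2, ← hs, ← hs']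
      field_simp
    rw [e3]
    refine ⟨?_, ?_, ?_⟩
    · refine div_ne_zero (neg_ne_zero.2 ?_) hne
      simp [hγ, h0, h0']
    · rw [← add_div, div_add' _ _ _ hne, div_eq_zero_iff]
      left
      ring
    · field_simp

lemma card_S_coll (hσ2 : ∀ x, σ (σ x) = x) (q : ℕ) (hq : 2 ≤ q) (hσ : ∀ x, σ x = x ^ q)
    (hK : Fintype.card K = q ^ 2)
    (P Q : Pt σ) (hPQ : P ≠ Q) (κ : K)
    (hne : κ * H σ (rep σ P) (rep σ Q) + H σ (rep σ Q) (rep σ P) = 0) :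
    (univ.filter fun R : Pt σ => R ≠ P ∧ R ≠ Q ∧ σ (gg σ P Q R) = κ * gg σ P Q R).card
      = q - 1 := by
  rw [card_S_eq σ hσ2 P Q hPQ κ]
  have h0 := H_rep_ne σ hσ2 P Q hPQ
  have h0' := H_rep_ne σ hσ2 Q P hPQ.symm
  generalize H σ (rep σ P) (rep σ Q) = h at *
  generalize H σ (rep σ Q) (rep σ P) = k at *
  have h1 : ((univ.filter fun x : K => σ x = -x).erase 0).card = q - 1 := by
    rw [card_erase_of_mem (by simp), card_anti σ q hq hσ hσ2 hK]
  rw [← h1]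
  have key : ∀ t : K, σ t * k = κ * (t * h) ↔ σ t = - t := by
    intro t
    constructor
    · intro e
      apply mul_right_cancel₀ h0'
      linear_combination e + t * hne
    · intro e
      rw [e]
      linear_combination - t * hne
  refine card_bij (fun p _ => p.1) ?_ ?_ ?_
  · rintro ⟨t, γ⟩ hp
    simp only [mem_filter, mem_univ, true_and, mem_erase, key] at hp ⊢
    exact ⟨hp.1, hp.2.2⟩
  · rintro ⟨t, γ⟩ hp ⟨t', γ'⟩ hp' heq
    simp only [mem_filter, mem_univ, true_and, key] at hp hp' heq
    have aux : ∀ t γ : K, t + σ t + γ * σ γ * (h * k) = 0 → σ t = - t → γ = 0 := by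
      intro t γ e1 e2
      rw [e2] at e1
      simpa [h0, h0'] using e1
    rw [heq, aux _ _ hp.2.1 hp.2.2, aux _ _ hp'.2.1 hp'.2.2]
  · intro t ht
    simp only [mem_filter, mem_univ, true_and, mem_erase] at ht
    refine ⟨(t, 0), ?_, rfl⟩
    simp only [mem_filter, mem_univ, true_and, key]
    exact ⟨ht.1, by rw [ht.2]; simp, ht.2⟩

end Count

section Graph

variable {K : Type} [Field K] [Fintype K] (σ : K →+* K)

/-- Vertices: points of the elliptic quadric `Q^-(5,q)`. -/
abbrev Vtx : Type := {u : K // u * σ u = 1} × Pt σ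

/-- The collinearity graph. -/
def Cg (hσ2 : ∀ x, σ (σ x) = x) : SimpleGraph (Vtx σ) where
  Adj x y := x ≠ y ∧ x.1.1 * σ (H σ (rep σ x.2) (rep σ y.2)) +
    y.1.1 * H σ (rep σ x.2) (rep σ y.2) = 0
  symm := by
    constructor
    intro x y h
    refine ⟨h.1.symm, ?_⟩
    rw [H_symm σ hσ2 (rep σ x.2) (rep σ y.2), hσ2]
    linear_combination h.2
  loopless := by
    constructor
    intro x h
    exact h.1 rfl

variable (hσ2 : ∀ x, σ (σ x) = x)

lemma adj_same (u r : {u : K // u * σ u = 1}) (P : Pt σ) :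
    (Cg σ hσ2).Adj (u, P) (r, P) ↔ r ≠ u := by
  simp [Cg, H_rep_self, eq_comm]

lemma adj_ne (u r : {u : K // u * σ u = 1}) (P R : Pt σ) (h : P ≠ R) :
    (Cg σ hσ2).Adj (u, P) (r, R) ↔
      u.1 * σ (H σ (rep σ P) (rep σ R)) + r.1 * H σ (rep σ P) (rep σ R) = 0 := by
  simp [Cg, h]

lemma exists_unique_r (hσ2 : ∀ x, σ (σ x) = x) (u : {u : K // u * σ u = 1}) (h : K) (h0 : h ≠ 0) :
    ∃ r0 : {u : K // u * σ u = 1}, ∀ r : {u : K // u * σ u = 1},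
      u.1 * σ h + r.1 * h = 0 ↔ r = r0 := by
  have h0' : σ h ≠ 0 := by simpa using h0
  obtain ⟨u, hu⟩ := u
  refine ⟨⟨- u * σ h / h, ?_⟩, ?_⟩
  · simp only [map_div₀, map_mul, map_neg, hσ2]
    field_simp
    linear_combination hu
  · rintro ⟨r, hr⟩
    simp only [Subtype.mk.injEq]
    rw [eq_div_iff h0]
    constructor <;> intro h <;> linear_combination h

lemma card_filter_prod (p : Vtx σ → Prop) [DecidablePred p] :
    (univ.filter p).card = ∑ R : Pt σ, (univ.filter fun r => p (r, R)).card := by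
  rw [card_eq_sum_card_fiberwise (f := fun x : Vtx σ => x.2) (t := univ) (by simp)]
  refine sum_congr rfl fun R _ => ?_
  symm
  refine card_bij (fun r _ => (r, R)) ?_ ?_ ?_
  · intro r hr
    simpa using hr
  · intro r _ r' _ h
    exact (Prod.mk.inj h).1
  · rintro ⟨r, R'⟩ h
    simp only [mem_filter, mem_univ, true_and] at h
    obtain ⟨h, rfl⟩ := h
    exact ⟨r, by simpa using h, rfl⟩

lemma card_Usub (hσ2 : ∀ x, σ (σ x) = x) (q : ℕ) (hq : 2 ≤ q)
    (hσ : ∀ x, σ x = x ^ q) (hK : Fintype.card K = q ^ 2) : Fintype.card {u : K // u * σ u = 1} = q + 1 := by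
  rw [Fintype.card_subtype]
  exact card_U σ q hq hσ hσ2 hK

lemma card_Pt (hσ2 : ∀ x, σ (σ x) = x) (q : ℕ) (hq : 2 ≤ q)
    (hσ : ∀ x, σ x = x ^ q) (hK : Fintype.card K = q ^ 2) : Fintype.card (Pt σ) = q ^ 3 + 1 := by
  rw [Fintype.card_option, Fintype.card_subtype]
  congr 1
  rw [card_eq_sum_card_fiberwise (f := fun x : K × K => x.1) (t := univ) (by simp)]
  have : ∀ a : K, ((univ.filter fun p : K × K => p.2 + σ p.2 + p.1 * σ p.1 = 0).filter
      fun p => p.1 = a).card = q := by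
    intro a
    rw [← card_trace σ q hq hσ hσ2 hK (- (a * σ a)) (by simp [hσ2, mul_comm])]
    refine card_bij (fun p _ => p.2) ?_ ?_ ?_
    · rintro ⟨a', b⟩ h
      simp only [mem_filter, mem_univ, true_and] at h ⊢
      obtain ⟨h, rfl⟩ := h
      linear_combination h
    · rintro ⟨a', b⟩ h ⟨a'', b'⟩ h' e
      simp only [mem_filter, mem_univ, true_and] at h h' e
      rw [h.2, h'.2, e]
    · intro b h
      simp only [mem_filter, mem_univ, true_and] at h
      refine ⟨(a, b), ?_, rfl⟩
      simp only [mem_filter, mem_univ, true_and, and_true]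
      linear_combination h
  rw [sum_congr rfl fun a _ => this a, sum_const, card_univ, hK]
  simp only [smul_eq_mul]
  ring

lemma card_Vtx (hσ2 : ∀ x, σ (σ x) = x) (q : ℕ) (hq : 2 ≤ q)
    (hσ : ∀ x, σ x = x ^ q) (hK : Fintype.card K = q ^ 2) : Fintype.card (Vtx σ) = (q + 1) * (q ^ 3 + 1) := by
  rw [Fintype.card_prod, card_Usub σ hσ2 q hq hσ hK, card_Pt σ hσ2 q hq hσ hK]

lemma card_nbr (hσ2 : ∀ x, σ (σ x) = x) (q : ℕ) (hq : 2 ≤ q)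
    (hσ : ∀ x, σ x = x ^ q) (hK : Fintype.card K = q ^ 2) (x : Vtx σ) : (univ.filter fun z => (Cg σ hσ2).Adj x z).card = q ^ 3 + q := by
  obtain ⟨u, P⟩ := x
  rw [card_filter_prod]
  have : ∀ R : Pt σ, (univ.filter fun r => (Cg σ hσ2).Adj (u, P) (r, R)).card =
      1 + if R = P then q - 1 else 0 := by
    intro R
    split_ifs with h
    · subst h
      simp only [adj_same]
      rw [filter_ne', card_erase_of_mem (mem_univ _), card_univ, card_Usub σ hσ2 q hq hσ hK]
      omega
    · simp only [adj_ne σ hσ2 _ _ _ _ (Ne.symm h)]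
      obtain ⟨r0, hr0⟩ := exists_unique_r σ hσ2 u _ (H_rep_ne σ hσ2 _ _ (Ne.symm h))
      simp only [hr0]
      rw [card_eq_one]
      exact ⟨r0, by ext r; simp⟩
  rw [sum_congr rfl fun R _ => this R, sum_add_distrib]
  simp only [sum_const, card_univ, card_Pt σ hσ2 q hq hσ hK, sum_ite_eq', mem_univ, if_true]
  simp
  omega

lemma card_common_same (hσ2 : ∀ x, σ (σ x) = x) (q : ℕ) (hq : 2 ≤ q)
    (hσ : ∀ x, σ x = x ^ q) (hK : Fintype.card K = q ^ 2) (u w : {u : K // u * σ u = 1}) (P : Pt σ) (huw : u ≠ w) :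
    (univ.filter fun z => (Cg σ hσ2).Adj (u, P) z ∧ (Cg σ hσ2).Adj (w, P) z).card = q - 1 := by
  rw [card_filter_prod]
  have : ∀ R : Pt σ, (univ.filter fun r => (Cg σ hσ2).Adj (u, P) (r, R) ∧
      (Cg σ hσ2).Adj (w, P) (r, R)).card = if R = P then q - 1 else 0 := by
    intro R
    split_ifs with h
    · subst h
      simp only [adj_same]
      have : (univ.filter fun r : {u : K // u * σ u = 1} => r ≠ u ∧ r ≠ w)
          = (univ.erase u).erase w := by
        ext r; simp [and_comm]
      rw [this, card_erase_of_mem (by simp [huw.symm]), card_erase_of_mem (mem_univ _), card_univ,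
        card_Usub σ hσ2 q hq hσ hK]
      omega
    · simp only [adj_ne σ hσ2 _ _ _ _ (Ne.symm h)]
      rw [card_eq_zero, filter_eq_empty_iff]
      rintro r _ ⟨h1, h2⟩
      apply huw
      have h3 := H_rep_ne σ hσ2 _ _ (Ne.symm h)
      have h3' : σ (H σ (rep σ P) (rep σ R)) ≠ 0 := by simpa using h3
      apply Subtype.ext
      apply mul_right_cancel₀ h3'
      linear_combination h1 - h2
  rw [sum_congr rfl fun R _ => this R]
  simp

lemma card_common_ne (hσ2 : ∀ x, σ (σ x) = x) (q : ℕ) (hq : 2 ≤ q)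
    (hσ : ∀ x, σ x = x ^ q) (hK : Fintype.card K = q ^ 2) (u w : {u : K // u * σ u = 1}) (P Q : Pt σ) (hPQ : P ≠ Q) :
    (univ.filter fun z => (Cg σ hσ2).Adj (u, P) z ∧ (Cg σ hσ2).Adj (w, Q) z).card =
      if (Cg σ hσ2).Adj (u, P) (w, Q) then q - 1 else q ^ 2 + 1 := by
  have hu0 : u.1 ≠ 0 := by
    intro h; have := u.2; rw [h] at this; simp at this
  have hsub : ∀ (u w : {u : K // u * σ u = 1}) (P Q : Pt σ) (hPQ : P ≠ Q),
      (univ.filter fun r => (Cg σ hσ2).Adj (u, P) (r, P) ∧ (Cg σ hσ2).Adj (w, Q) (r, P)).card =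
      if (Cg σ hσ2).Adj (w, Q) (u, P) then 0 else 1 := by
    intro u w P Q hPQ
    simp only [adj_same, adj_ne σ hσ2 _ _ _ _ hPQ.symm]
    obtain ⟨r0, hr0⟩ := exists_unique_r σ hσ2 w _ (H_rep_ne σ hσ2 _ _ hPQ.symm)
    simp only [hr0]
    split_ifs with h
    · subst h
      rw [card_eq_zero, filter_eq_empty_iff]
      rintro r _ ⟨h1, h2⟩
      exact h1 h2
    · rw [card_eq_one]
      refine ⟨r0, ?_⟩
      ext r
      simp only [mem_filter, mem_univ, true_and, mem_singleton]
      constructor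
      · exact fun h => h.2
      · rintro rfl
        exact ⟨fun e => h e.symm, rfl⟩
  rw [card_filter_prod]
  have : ∀ R : Pt σ, (univ.filter fun r => (Cg σ hσ2).Adj (u, P) (r, R) ∧
      (Cg σ hσ2).Adj (w, Q) (r, R)).card =
      (if R = P then (if (Cg σ hσ2).Adj (u, P) (w, Q) then 0 else 1) else 0) +
      (if R = Q then (if (Cg σ hσ2).Adj (u, P) (w, Q) then 0 else 1) else 0) +
      (if R ≠ P ∧ R ≠ Q ∧ σ (gg σ P Q R) = (w.1 / u.1) * gg σ P Q R then 1 else 0) := by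
    intro R
    by_cases h1 : R = P
    · subst h1
      rw [hsub u w R Q hPQ, (Cg σ hσ2).adj_comm]
      simp [hPQ]
    by_cases h2 : R = Q
    · subst h2
      have := hsub w u R P hPQ.symm
      simp only [and_comm] at this ⊢
      rw [this]
      simp [h1]
    simp only [h1, h2, if_false, ne_eq, not_false_eq_true, true_and, zero_add]
    have n1 := H_rep_ne σ hσ2 _ _ (Ne.symm h1)
    have n2 := H_rep_ne σ hσ2 _ _ h2
    simp only [adj_ne σ hσ2 _ _ _ _ (Ne.symm h1), adj_ne σ hσ2 _ _ _ _ (Ne.symm h2)]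
    obtain ⟨r0, hr0⟩ := exists_unique_r σ hσ2 u _ n1
    have e0 := (hr0 r0).2 rfl
    simp only [hr0]
    have hr00 : r0.1 ≠ 0 := by
      intro h; have := r0.2; rw [h] at this; simp at this
    have hiff : w.1 * σ (H σ (rep σ Q) (rep σ R)) + r0.1 * H σ (rep σ Q) (rep σ R) = 0 ↔
        σ (gg σ P Q R) = (w.1 / u.1) * gg σ P Q R := by
      rw [div_mul_eq_mul_div, eq_div_iff hu0]
      simp only [gg, map_mul]
      rw [H_symm σ hσ2 (rep σ R) (rep σ Q), hσ2]
      constructor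
      · intro h
        linear_combination (σ (H σ (rep σ R) (rep σ Q))) * e0 - H σ (rep σ P) (rep σ R) * h
      · intro h
        apply mul_left_cancel₀ n1
        linear_combination (σ (H σ (rep σ R) (rep σ Q))) * e0 - h
    split_ifs with h3
    · rw [card_eq_one]
      refine ⟨r0, ?_⟩
      ext r
      simp only [mem_filter, mem_univ, true_and, mem_singleton]
      constructor
      · exact fun h => h.1
      · rintro rfl
        exact ⟨rfl, hiff.2 h3⟩
    · rw [card_eq_zero, filter_eq_empty_iff]
      rintro r _ ⟨rfl, h⟩
      exact h3 (hiff.1 h)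
  rw [sum_congr rfl fun R _ => this R, sum_add_distrib, sum_add_distrib]
  simp only [sum_ite_eq', mem_univ, if_true]
  rw [← card_filter]
  have hκ : (w.1 / u.1) * σ (w.1 / u.1) = 1 := by
    have hu0' : σ u.1 ≠ 0 := by simpa using hu0
    rw [map_div₀]
    field_simp
    rw [w.2, u.2]
  have hcoll : (Cg σ hσ2).Adj (u, P) (w, Q) ↔
      w.1 / u.1 * H σ (rep σ P) (rep σ Q) + H σ (rep σ Q) (rep σ P) = 0 := by
    rw [adj_ne σ hσ2 _ _ _ _ hPQ, ← H_symm σ hσ2]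
    field_simp
    rw [add_comm, mul_comm u.1, mul_zero]
  split_ifs with h
  · rw [card_S_coll σ hσ2 q hq hσ hK P Q hPQ _ (hcoll.1 h)]
    simp
  · rw [card_S_ne σ hσ2 q hK P Q hPQ _ hκ (fun e => h (hcoll.2 e))]
    have : 1 ≤ q ^ 2 := Nat.one_le_pow _ _ (by omega)
    omega

lemma Cg_srg (hσ2 : ∀ x, σ (σ x) = x) (q : ℕ) (hq : 2 ≤ q)
    (hσ : ∀ x, σ x = x ^ q) (hK : Fintype.card K = q ^ 2) : (Cg σ hσ2).IsSRGWith ((q + 1) * (q ^ 3 + 1)) (q ^ 3 + q) (q - 1) (q ^ 2 + 1) where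
  card := card_Vtx σ hσ2 q hq hσ hK
  regular := by
    intro x
    rw [← card_nbr σ hσ2 q hq hσ hK x, ← SimpleGraph.card_neighborFinset_eq_degree]
    congr 1
    ext z
    simp
  of_adj := by
    rintro ⟨u, P⟩ ⟨w, Q⟩ h
    rw [Fintype.card_of_subtype
      (univ.filter fun z => (Cg σ hσ2).Adj (u, P) z ∧ (Cg σ hσ2).Adj (w, Q) z)
      (by intro z; simp [SimpleGraph.mem_commonNeighbors])]
    by_cases hPQ : P = Q
    · subst hPQ
      exact card_common_same σ hσ2 q hq hσ hK u w P (((adj_same σ hσ2 _ _ _).1 h).symm)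
    · rw [card_common_ne σ hσ2 q hq hσ hK u w P Q hPQ, if_pos h]
  of_not_adj := by
    rintro ⟨u, P⟩ ⟨w, Q⟩ hne h
    rw [Fintype.card_of_subtype
      (univ.filter fun z => (Cg σ hσ2).Adj (u, P) z ∧ (Cg σ hσ2).Adj (w, Q) z)
      (by intro z; simp [SimpleGraph.mem_commonNeighbors])]
    by_cases hPQ : P = Q
    · subst hPQ
      exfalso
      rw [adj_same] at h
      apply h
      rintro rfl
      exact hne rfl
    · rw [card_common_ne σ hσ2 q hq hσ hK u w P Q hPQ, if_neg h]

end Graph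

section Embedding

variable {V : Type} [Fintype V]

lemma embed_idem (E : Matrix V V ℝ) (hE : E * E = E) (hT : E.transpose = E) (d : ℕ)
    (htr : E.trace = d) :
    ∃ f : V → EuclideanSpace ℝ (Fin d), ∀ x y,
      dist (f x) (f y) ^ 2 = E x x + E y y - 2 * E x y := by
  let L : EuclideanSpace ℝ V →ₗ[ℝ] EuclideanSpace ℝ V := Matrix.toEuclideanLin E
  have hL : IsIdempotentElem L := by
    refine LinearMap.ext fun v => ?_
    change Matrix.toEuclideanLin E (Matrix.toEuclideanLin E v) = Matrix.toEuclideanLin E v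
    simp [Matrix.toLpLin_apply, Matrix.mulVec_mulVec, hE]
  have hLtr : LinearMap.trace ℝ _ L = d := by
    rw [← htr, LinearMap.trace_eq_matrix_trace ℝ (EuclideanSpace.basisFun V ℝ).toBasis]
    congr 1
    simp only [L]
    rw [Matrix.toEuclideanLin_eq_toLin_orthonormal, LinearMap.toMatrix_toLin]
  have hfr : Module.finrank ℝ (LinearMap.range L) = d := by
    have := (LinearMap.IsIdempotentElem.isProj_range L hL).trace
    rw [hLtr] at this
    exact_mod_cast this.symm
  let b := (stdOrthonormalBasis ℝ (LinearMap.range L)).reindex (finCongr hfr)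
  refine ⟨fun x => b.repr ⟨L (EuclideanSpace.single x 1), LinearMap.mem_range_self _ _⟩, ?_⟩
  intro x y
  rw [LinearIsometryEquiv.dist_map, Subtype.dist_eq]
  have hcol : ∀ x z, (L (EuclideanSpace.single x 1)) z = E z x := by
    intro x z
    simp [L, Matrix.toLpLin_apply]
  simp only [EuclideanSpace.dist_eq, hcol]
  rw [Real.sq_sqrt (Finset.sum_nonneg fun i _ => sq_nonneg _)]
  have hin : ∀ x y, ∑ z, E z x * E z y = E x y := by
    intro x y
    conv_rhs => rw [← hE, Matrix.mul_apply]
    refine Finset.sum_congr rfl fun z _ => ?_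
    congr 1
    conv_lhs => rw [← hT, Matrix.transpose_apply]
  rw [← hin x x, ← hin y y, ← hin x y, mul_sum, ← sum_add_distrib, ← sum_sub_distrib]
  refine Finset.sum_congr rfl fun z _ => ?_
  rw [Real.dist_eq, sq_abs]
  ring

lemma embed_srg (G : SimpleGraph V) (q : ℕ) (hq : 2 ≤ q)
    (h : G.IsSRGWith ((q + 1) * (q ^ 3 + 1)) (q ^ 3 + q) (q - 1) (q ^ 2 + 1)) :
    ∃ f : V → EuclideanSpace ℝ (Fin (q ^ 3 - q ^ 2 + q)), ∀ x y, x ≠ y →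
      (¬ G.Adj x y → dist (f x) (f y) = 1) ∧ (G.Adj x y → 1 < dist (f x) (f y)) := by
  have hq2 : (2 : ℝ) ≤ q := by exact_mod_cast hq
  set r : ℝ := (q : ℝ) with hr
  set A : Matrix V V ℝ := G.adjMatrix ℝ with hA
  set J : Matrix V V ℝ := Matrix.of fun _ _ => (1 : ℝ) with hJ
  have hsum : ∀ x, ∑ z, A x z = r ^ 3 + r := by
    intro x
    have := h.regular x
    simp only [hA, SimpleGraph.adjMatrix_apply]
    rw [Finset.sum_boole]
    rw [← SimpleGraph.card_neighborFinset_eq_degree] at this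
    have e : (univ.filter fun z => G.Adj x z) = G.neighborFinset x := by ext z; simp
    rw [e, this]
    push_cast
    rfl
  have hAs : ∀ x y, A x y = A y x := by
    intro x y
    simp only [hA, SimpleGraph.adjMatrix_apply, G.adj_comm]
  have hJJ : J * J = ((r + 1) * (r ^ 3 + 1)) • J := by
    ext x y
    simp only [hJ, Matrix.mul_apply, Matrix.of_apply, Matrix.smul_apply]
    simp [h.card, hr]
  have hAJ : A * J = (r ^ 3 + r) • J := by
    ext x y
    simp only [hJ, Matrix.mul_apply, Matrix.of_apply, Matrix.smul_apply, mul_one, hsum]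
    simp
  have hJA : J * A = (r ^ 3 + r) • J := by
    ext x y
    simp only [hJ, Matrix.mul_apply, Matrix.of_apply, Matrix.smul_apply, one_mul, smul_eq_mul,
      mul_one]
    rw [← hsum y]
    exact sum_congr rfl fun z _ => hAs z y
  have hAA : A * A = ((r - 1) * (r ^ 2 + 1)) • (1 : Matrix V V ℝ) + (r - 2 - r ^ 2) • A
      + (r ^ 2 + 1) • J := by
    have h1 := h.matrix_eq (α := ℝ)
    rw [pow_two] at h1
    rw [hA, h1]
    ext x y
    simp only [Matrix.add_apply, Matrix.smul_apply]
    simp only [SimpleGraph.adjMatrix_apply, hJ,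
      Matrix.of_apply, SimpleGraph.compl_adj, nsmul_eq_mul, smul_eq_mul, Matrix.one_apply]
    have e : ((q - 1 : ℕ) : ℝ) = r - 1 := by
      rw [Nat.cast_sub (by omega)]; simp [hr]
    rw [e]
    push_cast
    by_cases hxy : x = y
    · subst hxy
      simp
      ring
    · by_cases hadj : G.Adj x y
      · simp [hxy, hadj]
        ring
      · simp [hxy, hadj]
        rfl
  set M : Matrix V V ℝ := (r ^ 2 - 1) • (1 : Matrix V V ℝ) - (r + 1) • A + J with hM
  have hMM : M * M = (r * (r + 1) ^ 2) • M := by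
    simp only [hM, mul_add, add_mul, mul_sub, sub_mul, smul_mul_assoc, mul_smul_comm, one_mul,
      mul_one, hAA, hAJ, hJA, hJJ]
    module
  have hMT : M.transpose = M := by
    ext x y
    simp only [hM, Matrix.transpose_apply, Matrix.add_apply, Matrix.sub_apply, Matrix.smul_apply,
      hAs y x, hJ, Matrix.of_apply, Matrix.one_apply, eq_comm]
  have hc : r * (r + 1) ^ 2 ≠ 0 := by positivity
  have hMd : ∀ x, M x x = r ^ 2 := by
    intro x
    simp [hM, hA, hJ]
  have hMn : ∀ x y, x ≠ y → ¬ G.Adj x y → M x y = 1 := by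
    intro x y hxy hn
    simp [hM, hA, hJ, hxy, hn]
  have hMa : ∀ x y, G.Adj x y → M x y = - r := by
    intro x y hn
    simp [hM, hA, hJ, hn, hn.ne]
  obtain ⟨f, hf⟩ := embed_idem ((r * (r + 1) ^ 2)⁻¹ • M)
    (by rw [smul_mul_assoc, mul_smul_comm, hMM, smul_smul (r * (r + 1) ^ 2)⁻¹ (r * (r + 1) ^ 2),
          inv_mul_cancel₀ hc, one_smul])
    (by rw [Matrix.transpose_smul, hMT]) (q ^ 3 - q ^ 2 + q)
    (by
      rw [Matrix.trace_smul, Matrix.trace]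
      simp only [Matrix.diag_apply, hMd, sum_const, card_univ, h.card]
      have : q ^ 2 ≤ q ^ 3 := Nat.pow_le_pow_right (by omega) (by omega)
      push_cast [Nat.cast_sub this]
      simp only [← hr, nsmul_eq_mul, smul_eq_mul]
      push_cast
      simp only [← hr]
      field_simp
      ring)
  simp only [Matrix.smul_apply, smul_eq_mul, hMd] at hf
  set δ : ℝ := 2 * (r - 1) / (r * (r + 1)) with hδ
  have hδ0 : 0 < δ := div_pos (by linarith) (by positivity)
  have hs0 : 0 < Real.sqrt δ := Real.sqrt_pos.2 hδ0
  refine ⟨fun x => (Real.sqrt δ)⁻¹ • f x, ?_⟩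
  have hd : ∀ x y, dist ((Real.sqrt δ)⁻¹ • f x) ((Real.sqrt δ)⁻¹ • f y) ^ 2 =
      dist (f x) (f y) ^ 2 / δ := by
    intro x y
    rw [dist_smul₀, Real.norm_of_nonneg (by positivity), mul_pow, inv_pow,
      Real.sq_sqrt hδ0.le]
    field_simp
  intro x y hxy
  refine ⟨fun hn => ?_, fun hn => ?_⟩
  · rw [← sq_eq_sq₀ dist_nonneg zero_le_one, hd, hf, hMn x y hxy hn, hδ]
    have : r - 1 ≠ 0 := by linarith
    field_simp
    ring
  · rw [← sq_lt_sq₀ zero_le_one dist_nonneg, hd, hf, hMa x y hn, hδ]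
    have h1 : 0 < r - 1 := by linarith
    rw [lt_div_iff₀ (by positivity)]
    have e : (r * (r + 1) ^ 2)⁻¹ * r ^ 2 + (r * (r + 1) ^ 2)⁻¹ * r ^ 2 -
        2 * ((r * (r + 1) ^ 2)⁻¹ * -r) = 2 * r / (r * (r + 1)) := by
      field_simp
      ring
    rw [e]
    simp only [one_pow, one_mul]
    gcongr
    linarith

end Embedding

section Final

lemma srg_iso {V W : Type} [Fintype V] [Fintype W] (G : SimpleGraph V) (G' : SimpleGraph W)
    [DecidableRel G.Adj] [DecidableRel G'.Adj] (e : G ≃g G') (n k l m : ℕ)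
    (h : G.IsSRGWith n k l m) : G'.IsSRGWith n k l m := by
  have hcn : ∀ v w, Fintype.card (G'.commonNeighbors v w) =
      Fintype.card (G.commonNeighbors (e.symm v) (e.symm w)) := by
    intro v w
    refine Fintype.card_congr (Equiv.subtypeEquiv e.symm.toEquiv ?_)
    intro z
    change z ∈ G'.commonNeighbors v w ↔ e.symm z ∈ G.commonNeighbors (e.symm v) (e.symm w)
    simp only [SimpleGraph.mem_commonNeighbors, SimpleGraph.Iso.map_adj_iff]
  refine ⟨?_, ?_, ?_, ?_⟩
  · rw [← h.card]
    exact (Fintype.card_congr e.toEquiv).symm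
  · intro v
    rw [← h.regular (e.symm v), ← SimpleGraph.card_neighborSet_eq_degree,
      ← SimpleGraph.card_neighborSet_eq_degree]
    refine Fintype.card_congr (Equiv.subtypeEquiv e.symm.toEquiv ?_)
    intro z
    change G'.Adj v z ↔ G.Adj (e.symm v) (e.symm z)
    rw [SimpleGraph.Iso.map_adj_iff]
  · intro v w hvw
    rw [hcn]
    exact h.of_adj _ _ ((SimpleGraph.Iso.map_adj_iff e.symm).2 hvw)
  · intro v w hne hvw
    rw [hcn]
    exact h.of_not_adj (fun he => hne (e.symm.injective he))
      (fun ha => hvw ((SimpleGraph.Iso.map_adj_iff e.symm).1 ha))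

lemma clique_card_le {V : Type} [Fintype V] (G : SimpleGraph V) (q n k m : ℕ) (hq : 2 ≤ q)
    (h : G.IsSRGWith n k (q - 1) m) (S : Finset V)
    (hS : ∀ x ∈ S, ∀ y ∈ S, x ≠ y → G.Adj x y) : S.card ≤ q + 1 := by
  by_cases h1 : S.card ≤ 1
  · omega
  push Not at h1
  obtain ⟨x, hx, y, hy, hxy⟩ := Finset.one_lt_card.1 h1
  have hc := h.of_adj x y (hS x hx y hy hxy)
  rw [← Set.toFinset_card] at hc
  have hsub : (S.erase x).erase y ⊆ (G.commonNeighbors x y).toFinset := by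
    intro z hz
    simp only [mem_erase] at hz
    rw [Set.mem_toFinset, SimpleGraph.mem_commonNeighbors]
    exact ⟨hS x hx z hz.2.2 hz.2.1.symm, hS y hy z hz.2.2 hz.1.symm⟩
  have h2 := card_le_card hsub
  rw [hc, card_erase_of_mem (by simp [hxy.symm, hy]), card_erase_of_mem hx] at h2
  omega

lemma main_of_srg {V : Type} [Fintype V] (G : SimpleGraph V) (q : ℕ) (hq : 2 ≤ q)
    (h : G.IsSRGWith ((q + 1) * (q ^ 3 + 1)) (q ^ 3 + q) (q - 1) (q ^ 2 + 1))
    (hcol : Gᶜ.Colorable (q ^ 3 + 1)) :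
    ∃ P : Finset (EuclideanSpace ℝ (Fin (q ^ 3 - q ^ 2 + q))),
      (∀ x ∈ P, ∀ y ∈ P, x ≠ y → 1 ≤ dist x y) ∧
      (unitDistanceGraph (P : Set (EuclideanSpace ℝ (Fin (q ^ 3 - q ^ 2 + q))))).IsSRGWith
        ((q + 1) * (q ^ 3 + 1)) (q ^ 4) (q * (q - 1) * (q ^ 2 + 1)) ((q - 1) * q ^ 3) ∧
      (unitDistanceGraph (P : Set (EuclideanSpace ℝ (Fin (q ^ 3 - q ^ 2 + q))))).chromaticNumber
        = ((q ^ 3 + 1 : ℕ) : ℕ∞) := by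
  obtain ⟨f, hf⟩ := embed_srg G q hq h
  have hge : ∀ x y, x ≠ y → 1 ≤ dist (f x) (f y) := by
    intro x y hxy
    by_cases ha : G.Adj x y
    · exact ((hf x y hxy).2 ha).le
    · exact ((hf x y hxy).1 ha).ge
  have hinj : Function.Injective f := by
    intro x y hxy
    by_contra hne
    have := hge x y hne
    rw [hxy, dist_self] at this
    linarith
  have hadj : ∀ x y, dist (f x) (f y) = 1 ↔ Gᶜ.Adj x y := by
    intro x y
    rw [SimpleGraph.compl_adj]
    constructor
    · intro hd
      have hne : x ≠ y := by
        rintro rfl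
        simp at hd
      exact ⟨hne, fun ha => ((hf x y hne).2 ha).ne' hd⟩
    · rintro ⟨hne, ha⟩
      exact (hf x y hne).1 ha
  let P : Finset (EuclideanSpace ℝ (Fin (q ^ 3 - q ^ 2 + q))) := univ.image f
  have hmem : ∀ x, f x ∈ (P : Set (EuclideanSpace ℝ (Fin (q ^ 3 - q ^ 2 + q)))) := by
    intro x; simp [P]
  let g : V → (P : Set (EuclideanSpace ℝ (Fin (q ^ 3 - q ^ 2 + q)))) := fun x => ⟨f x, hmem x⟩
  have hg : Function.Bijective g := by
    refine ⟨fun x y hxy => hinj (congrArg Subtype.val hxy), ?_⟩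
    rintro ⟨p, hp⟩
    obtain ⟨x, -, rfl⟩ := Finset.mem_image.1 (Finset.mem_coe.1 hp)
    exact ⟨x, rfl⟩
  let e : Gᶜ ≃g unitDistanceGraph (P : Set (EuclideanSpace ℝ (Fin (q ^ 3 - q ^ 2 + q)))) :=
    { toEquiv := Equiv.ofBijective g hg
      map_rel_iff' := by
        intro x y
        exact hadj x y }
  refine ⟨P, ?_, ?_, ?_⟩
  · intro x hx y hy hxy
    obtain ⟨x, -, rfl⟩ := Finset.mem_image.1 hx
    obtain ⟨y, -, rfl⟩ := Finset.mem_image.1 hy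
    exact hge x y (fun h => hxy (by rw [h]))
  · have hc := h.compl
    have := srg_iso _ _ e _ _ _ _ hc
    obtain ⟨r, rfl⟩ : ∃ r, q = r + 1 := ⟨q - 1, by omega⟩
    have e1 : (r + 1 + 1) * ((r + 1) ^ 3 + 1) - ((r + 1) ^ 3 + (r + 1)) - 1 = (r + 1) ^ 4 := by
      have : (r + 1 + 1) * ((r + 1) ^ 3 + 1) = (r + 1) ^ 4 + 1 + ((r + 1) ^ 3 + (r + 1)) := by ring
      omega
    have e2 : (r + 1 + 1) * ((r + 1) ^ 3 + 1) - (2 * ((r + 1) ^ 3 + (r + 1)) - ((r + 1) ^ 2 + 1)) - 2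
        = (r + 1) * (r + 1 - 1) * ((r + 1) ^ 2 + 1) := by
      have a1 : 2 * ((r + 1) ^ 3 + (r + 1)) - ((r + 1) ^ 2 + 1) =
          2 * r ^ 3 + 5 * r ^ 2 + 6 * r + 2 := by
        have : 2 * ((r + 1) ^ 3 + (r + 1)) =
          2 * r ^ 3 + 5 * r ^ 2 + 6 * r + 2 + ((r + 1) ^ 2 + 1) := by ring
        omega
      have a2 : (r + 1 + 1) * ((r + 1) ^ 3 + 1) = (r + 1) * r * ((r + 1) ^ 2 + 1) + 2 +
        (2 * r ^ 3 + 5 * r ^ 2 + 6 * r + 2) := by ring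
      rw [a1, a2, Nat.add_sub_cancel, Nat.add_sub_cancel, Nat.add_sub_cancel]
    have e3 : (r + 1 + 1) * ((r + 1) ^ 3 + 1) - (2 * ((r + 1) ^ 3 + (r + 1)) - (r + 1 - 1))
        = (r + 1 - 1) * (r + 1) ^ 3 := by
      have a1 : 2 * ((r + 1) ^ 3 + (r + 1)) - r = 2 * (r + 1) ^ 3 + r + 2 := by omega
      have a2 : (r + 1 + 1) * ((r + 1) ^ 3 + 1) = r * (r + 1) ^ 3 +
        (2 * (r + 1) ^ 3 + r + 2) := by ring
      rw [Nat.add_sub_cancel, a1, a2, Nat.add_sub_cancel]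
    rw [e1, e2, e3] at this
    convert this
  · refine le_antisymm ?_ ?_
    · exact (SimpleGraph.Colorable.of_hom e.symm.toHom hcol).chromaticNumber_le
    · rw [SimpleGraph.le_chromaticNumber_iff_colorable]
      intro n hn
      have hn' : Gᶜ.Colorable n := SimpleGraph.Colorable.of_hom e.toHom hn
      obtain ⟨C⟩ := hn'
      have hcard : (univ : Finset V).card = ∑ c : Fin n, (univ.filter fun x => C x = c).card :=
        card_eq_sum_card_fiberwise (by simp)
      have hle : ∀ c ∈ (univ : Finset (Fin n)), (univ.filter fun x => C x = c).card ≤ q + 1 := by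
        intro c _
        refine clique_card_le G q _ _ _ hq h _ ?_
        intro x hx y hy hxy
        simp only [mem_filter, mem_univ, true_and] at hx hy
        by_contra hna
        exact C.valid ((SimpleGraph.compl_adj _ _ _).2 ⟨hxy, hna⟩) (hx.trans hy.symm)
      have h2 := sum_le_card_nsmul _ _ _ hle
      rw [← hcard, card_univ, h.card, card_univ, Fintype.card_fin, smul_eq_mul, mul_comm n] at h2
      exact_mod_cast Nat.le_of_mul_le_mul_left h2 (by omega)

end Final

end HermSpread

/-- For every prime power `q` there is a unit ball packing in dimension
`q^3 - q^2 + q` (given by a finite set of points with pairwise distances at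
least `1`) whose tangency graph (the unit-distance graph) is strongly regular
with parameters `((q+1)(q^3+1), q^4, q(q-1)(q^2+1), (q-1)q^3)` and has
chromatic number exactly `q^3 + 1`. -/
theorem exists_unit_ball_packing_srg_of_primePow (q : ℕ) (hq : IsPrimePow q) :
    ∃ P : Finset (EuclideanSpace ℝ (Fin (q ^ 3 - q ^ 2 + q))),
      (∀ x ∈ P, ∀ y ∈ P, x ≠ y → 1 ≤ dist x y) ∧
      (unitDistanceGraph (P : Set (EuclideanSpace ℝ (Fin (q ^ 3 - q ^ 2 + q))))).IsSRGWith
        ((q + 1) * (q ^ 3 + 1)) (q ^ 4) (q * (q - 1) * (q ^ 2 + 1)) ((q - 1) * q ^ 3) ∧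
      (unitDistanceGraph (P : Set (EuclideanSpace ℝ (Fin (q ^ 3 - q ^ 2 + q))))).chromaticNumber
        = ((q ^ 3 + 1 : ℕ) : ℕ∞) := by
  have hq2 : 2 ≤ q := hq.two_le
  obtain ⟨p, n, hp, hn, hpn⟩ := (isPrimePow_nat_iff q).1 hq
  have : Fact p.Prime := ⟨hp⟩
  let K := GaloisField p (n * 2)
  have : Fintype K := Fintype.ofFinite K
  have hK : Fintype.card K = q ^ 2 := by
    rw [← Nat.card_eq_fintype_card, GaloisField.card p (n * 2) (by omega), pow_mul, hpn]
  let σ : K →+* K := iterateFrobenius K p n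
  have hσ : ∀ x, σ x = x ^ q := by
    intro x
    rw [← hpn]
    exact iterateFrobenius_def p n x
  have hσ2 : ∀ x, σ (σ x) = x := by
    intro x
    rw [hσ, hσ, ← pow_mul, ← pow_two, ← hK, FiniteField.pow_card]
  refine HermSpread.main_of_srg (HermSpread.Cg σ hσ2) q hq2
    (HermSpread.Cg_srg σ hσ2 q hq2 hσ hK) ?_
  have hcol : (HermSpread.Cg σ hσ2)ᶜ.Coloring (HermSpread.Pt σ) :=
    SimpleGraph.Coloring.mk (fun x => x.2) (by
      rintro ⟨u, P⟩ ⟨w, Q⟩ h hPQ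
      simp only at hPQ
      subst hPQ
      rw [SimpleGraph.compl_adj, HermSpread.adj_same] at h
      apply h.2
      rintro rfl
      exact h.1 rfl)
  rw [← HermSpread.card_Pt σ hσ2 q hq2 hσ hK]
  exact hcol.colorable
end

section
/- Let G be a k-regular simple graph on a finite nonempty vertex set, let s be the least eigenvalue of its real adjacency matrix, and suppose s < 0 (e.g. G has at least one edge). Then the chromatic number of G is at least 1 − k/s. -/
open scoped Classical

/-- `μ` is an eigenvalue of the real adjacency matrix of the graph `G`. -/
def IsAdjEigenvalue {V : Type*} [Fintype V] (G : SimpleGraph V) (μ : ℝ) : Prop :=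
  ∃ x : V → ℝ, x ≠ 0 ∧ Matrix.mulVec (SimpleGraph.adjMatrix ℝ G) x = μ • x

open Matrix in
theorem hoffman_quad {V : Type*} [Fintype V] (G : SimpleGraph V) (s : ℝ)
    (hmin : ∀ t : ℝ, IsAdjEigenvalue G t → s ≤ t) (x : V → ℝ) :
    s * (x ⬝ᵥ x) ≤ x ⬝ᵥ (SimpleGraph.adjMatrix ℝ G *ᵥ x) := by
  have hA : (SimpleGraph.adjMatrix ℝ G - s • (1 : Matrix V V ℝ)).IsHermitian := by
    ext i j
    simp [Matrix.one_apply, SimpleGraph.adj_comm, eq_comm]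
  have hp : (SimpleGraph.adjMatrix ℝ G - s • (1 : Matrix V V ℝ)).PosSemidef := by
    rw [hA.posSemidef_iff_eigenvalues_nonneg]
    intro i
    have h := hA.mulVec_eigenvectorBasis i
    have h2 : s ≤ s + hA.eigenvalues i := by
      apply hmin
      refine ⟨(hA.eigenvectorBasis i).ofLp, ?_, ?_⟩
      · intro h0
        apply hA.eigenvectorBasis.toBasis.ne_zero i
        simpa using h0
      · rw [Matrix.sub_mulVec, Matrix.smul_mulVec, Matrix.one_mulVec] at h
        rw [add_smul, ← h]; abel
    simpa using h2
  have h := hp.dotProduct_mulVec_nonneg x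
  rw [Matrix.sub_mulVec, Matrix.smul_mulVec, Matrix.one_mulVec, dotProduct_sub,
    dotProduct_smul] at h
  simp only [star_trivial, smul_eq_mul] at h
  linarith

open Matrix in
theorem hoffman_indep {V : Type*} [Fintype V] [Nonempty V] (G : SimpleGraph V) (k : ℕ)
    (hreg : G.IsRegularOfDegree k) (s : ℝ)
    (hmin : ∀ t : ℝ, IsAdjEigenvalue G t → s ≤ t) (hneg : s < 0)
    (S : Finset V) (hS : ∀ u ∈ S, ∀ v ∈ S, ¬ G.Adj u v) :
    (S.card : ℝ) * (k - s) ≤ - s * Fintype.card V := by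
  rcases S.eq_empty_or_nonempty with rfl | hne
  · simp only [Finset.card_empty, Nat.cast_zero, zero_mul]
    have : (0 : ℝ) ≤ Fintype.card V := Nat.cast_nonneg _
    nlinarith
  have ha : (0 : ℝ) < S.card := by exact_mod_cast hne.card_pos
  have hn : (0 : ℝ) < Fintype.card V := by exact_mod_cast Fintype.card_pos
  set a : ℝ := (S.card : ℝ) with hadef
  set n : ℝ := (Fintype.card V : ℝ) with hndef
  set A := SimpleGraph.adjMatrix ℝ G with hAdef
  let e : V → ℝ := fun v => if v ∈ S then 1 else 0
  let o : V → ℝ := fun _ => 1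
  have hAo : A *ᵥ o = (k : ℝ) • o := by
    ext v
    have := hreg v
    simp only [hAdef, o, SimpleGraph.adjMatrix_mulVec_apply, Finset.sum_const, nsmul_eq_mul,
      Pi.smul_apply, smul_eq_mul, mul_one, SimpleGraph.card_neighborFinset_eq_degree]
    rw [← this]
  have hee : e ⬝ᵥ e = a := by simp [e, dotProduct, hadef]
  have heo : e ⬝ᵥ o = a := by simp [e, o, dotProduct, hadef]
  have hoe : o ⬝ᵥ e = a := by simp [e, o, dotProduct, hadef]
  have hoo : o ⬝ᵥ o = n := by simp [o, dotProduct, hndef]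
  have heAe : e ⬝ᵥ (A *ᵥ e) = 0 := by
    simp only [dotProduct, mulVec, hAdef, SimpleGraph.adjMatrix_apply, e]
    apply Finset.sum_eq_zero
    intro u _
    by_cases hu : u ∈ S
    · rw [Finset.sum_eq_zero, mul_zero]
      intro v _
      by_cases hv : v ∈ S
      · simp [hS u hu v hv]
      · simp [hv]
    · simp [hu]
  have hoAe : o ⬝ᵥ (A *ᵥ e) = k * a := by
    rw [dotProduct_mulVec, ← mulVec_transpose, hAdef, SimpleGraph.transpose_adjMatrix, ← hAdef,
      hAo, smul_dotProduct, hoe, smul_eq_mul]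
  have h := hoffman_quad G s hmin (n • e - a • o)
  rw [← hAdef] at h
  simp only [mulVec_sub, mulVec_smul, dotProduct_sub, sub_dotProduct, dotProduct_smul,
    smul_dotProduct, smul_eq_mul, hee, heo, hoe, hoo, heAe, hoAe, hAo] at h
  have h2 : 0 ≤ (n * a) * (- s * n - a * (k - s)) := by nlinarith
  have h3 := nonneg_of_mul_nonneg_right h2 (mul_pos hn ha)
  linarith

/-- Hoffman's eigenvalue bound: if `G` is a `k`-regular graph on a finite
nonempty vertex set and `s < 0` is the least eigenvalue of its real adjacency
matrix, then the chromatic number of `G` is at least `1 - k/s`. -/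
theorem hoffman_chromatic_bound {V : Type*} [Fintype V] [Nonempty V]
    (G : SimpleGraph V) (k : ℕ) (hreg : G.IsRegularOfDegree k) (s : ℝ)
    (hs : IsAdjEigenvalue G s) (hmin : ∀ t : ℝ, IsAdjEigenvalue G t → s ≤ t)
    (hneg : s < 0) :
    (1 - (k : ℝ) / s) ≤ (G.chromaticNumber.toNat : ℝ) := by
  obtain ⟨C⟩ : G.Colorable G.chromaticNumber.toNat :=
    SimpleGraph.colorable_chromaticNumber G.colorable_of_fintype
  set m := G.chromaticNumber.toNat
  have hn : (0 : ℝ) < Fintype.card V := by exact_mod_cast Fintype.card_pos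
  have hcard : (∑ i : Fin m, ((Finset.univ.filter fun v => C v = i).card : ℝ))
      = Fintype.card V := by
    rw [← Nat.cast_sum, ← Finset.card_eq_sum_card_fiberwise (f := C)]
    · simp
    · intro x _; simp
  have hsum := Finset.sum_le_sum (s := (Finset.univ : Finset (Fin m))) fun i _ =>
    hoffman_indep G k hreg s hmin hneg (Finset.univ.filter fun v => C v = i) (by
      intro u hu v hv huv
      simp only [Finset.mem_filter, Finset.mem_univ, true_and] at hu hv
      exact C.valid huv (hu.trans hv.symm))
  rw [← Finset.sum_mul, hcard] at hsum
  simp only [Finset.sum_const, Finset.card_univ, Fintype.card_fin, nsmul_eq_mul] at hsum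
  have h : (k : ℝ) - s ≤ m * (-s) := by
    by_contra hc
    push Not at hc
    nlinarith
  have : (1 - (k : ℝ) / s) = (k - s) / (-s) := by
    have hs0 : s ≠ 0 := hneg.ne
    rw [div_neg, sub_div, div_self hs0]
    ring
  rw [this, div_le_iff₀ (by linarith)]
  exact h
end

section
/- Let G be a connected, non-complete strongly regular graph with parameters (v, k, λ, μ) with μ > 0. Set δ = √((λ−μ)^2 + 4(k−μ)), r = (λ−μ+δ)/2 and s = (λ−μ−δ)/2. Then the real adjacency matrix of G has exactly the eigenvalues k, r and s, with multiplicities 1, f and g respectively, where Δ = ((v−1)(μ−λ) − 2k)/δ, f = (v−1+Δ)/2 and g = (v−1−Δ)/2. -/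
open scoped Classical

/-- The eigenspace of the real adjacency matrix of `G` for the value `μ`. -/
noncomputable def adjEigenspace {V : Type*} [Fintype V] (G : SimpleGraph V) (μ : ℝ) :
    Submodule ℝ (V → ℝ) :=
  Module.End.eigenspace (Matrix.toLin' (SimpleGraph.adjMatrix ℝ G)) μ

theorem aux_eig {V : Type*} [Fintype V] (G : SimpleGraph V) (t : ℝ) (P : Matrix V V ℝ)
    (h1 : G.adjMatrix ℝ * P = t • P)
    (h2 : ∀ x : V → ℝ, (G.adjMatrix ℝ).mulVec x = t • x → P.mulVec x = x) :
    (Module.finrank ℝ (adjEigenspace G t) : ℝ) = P.trace := by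
  have hp : LinearMap.IsProj (adjEigenspace G t) (Matrix.toLin' P) := by
    constructor
    · intro x
      rw [adjEigenspace, Module.End.mem_eigenspace_iff]
      simp only [Matrix.toLin'_apply, Matrix.mulVec_mulVec, h1, Matrix.smul_mulVec]
    · intro x hx
      rw [adjEigenspace, Module.End.mem_eigenspace_iff] at hx
      simp only [Matrix.toLin'_apply] at hx ⊢
      exact h2 x hx
  rw [← hp.trace, Matrix.trace_toLin'_eq]

theorem aux_iff {V : Type*} [Fintype V] (G : SimpleGraph V) (t : ℝ) 
    (h : (Module.finrank ℝ (adjEigenspace G t) : ℝ) ≠ 0) : IsAdjEigenvalue G t := by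
  have h' : adjEigenspace G t ≠ ⊥ := by
    intro hb
    rw [hb] at h
    simp at h
  obtain ⟨x, hx, hx0⟩ := Submodule.exists_mem_ne_zero_of_ne_bot h'
  refine ⟨x, hx0, ?_⟩
  rw [adjEigenspace, Module.End.mem_eigenspace_iff] at hx
  simpa [Matrix.toLin'_apply] using hx

/-- A connected non-complete strongly regular graph with parameters
`(v, k, λ, μ)`, `μ > 0`, has exactly the eigenvalues `k`,
`r = (λ-μ+δ)/2` and `s = (λ-μ-δ)/2` where `δ = √((λ-μ)² + 4(k-μ))`, with
multiplicities `1`, `f = (v-1+Δ)/2` and `g = (v-1-Δ)/2` respectively, where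
`Δ = ((v-1)(μ-λ) - 2k)/δ`. -/
theorem srg_eigenvalues_multiplicities {V : Type*} [Fintype V]
    (G : SimpleGraph V) (v k ℓ μ : ℕ)
    (hSRG : G.IsSRGWith v k ℓ μ) (hconn : G.Connected) (hnc : G ≠ ⊤) (hμ : 0 < μ)
    (δ r s Δ f g : ℝ)
    (hδ : δ = Real.sqrt (((ℓ : ℝ) - μ) ^ 2 + 4 * ((k : ℝ) - μ)))
    (hr : r = (((ℓ : ℝ) - μ) + δ) / 2)
    (hs : s = (((ℓ : ℝ) - μ) - δ) / 2)
    (hΔ : Δ = (((v : ℝ) - 1) * ((μ : ℝ) - ℓ) - 2 * k) / δ)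
    (hf : f = ((v : ℝ) - 1 + Δ) / 2)
    (hg : g = ((v : ℝ) - 1 - Δ) / 2) :
    (∀ t : ℝ, IsAdjEigenvalue G t ↔ t = (k : ℝ) ∨ t = r ∨ t = s) ∧
    Module.finrank ℝ (adjEigenspace G (k : ℝ)) = 1 ∧
    (Module.finrank ℝ (adjEigenspace G r) : ℝ) = f ∧
    (Module.finrank ℝ (adjEigenspace G s) : ℝ) = g := by
  obtain ⟨u, w, huw, hnadj⟩ : ∃ u w : V, u ≠ w ∧ ¬ G.Adj u w := by
    by_contra! hc
    apply hnc
    ext a b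
    rw [SimpleGraph.top_adj]
    exact ⟨fun h => h.ne, fun h => hc a b h⟩
  have hkμ : μ ≤ k := by
    rw [← hSRG.of_not_adj huw hnadj, ← hSRG.regular u]
    exact G.card_commonNeighbors_le_degree_left u w
  have hk0 : 0 < k := by omega
  have hℓk : ℓ < k := by
    have : 0 < G.degree u := by rw [hSRG.regular u]; exact hk0
    obtain ⟨z, hz⟩ := (G.degree_pos_iff_exists_adj u).1 this
    rw [← hSRG.of_adj u z hz, ← hSRG.regular u]
    exact hz.card_commonNeighbors_lt_degree
  have hkv : k + 2 ≤ v := by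
    have h1 : insert u (insert w (G.neighborFinset u)) ⊆ Finset.univ := Finset.subset_univ _
    have h2 := Finset.card_le_card h1
    rw [Finset.card_insert_of_notMem (by simp [huw]), Finset.card_insert_of_notMem (by simp [hnadj]),
      G.card_neighborFinset_eq_degree, hSRG.regular u, Finset.card_univ, hSRG.card] at h2
    omega
  obtain ⟨A, hA⟩ : ∃ A, A = G.adjMatrix ℝ := ⟨_, rfl⟩
  obtain ⟨J, hJ⟩ : ∃ J : Matrix V V ℝ, J = Matrix.of fun _ _ => 1 := ⟨_, rfl⟩
  have hsq : A * A = ((ℓ : ℝ) - μ) • A + ((k : ℝ) - μ) • (1 : Matrix V V ℝ) + (μ : ℝ) • J := by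
    have h := hSRG.matrix_eq (α := ℝ)
    have hc : Gᶜ.adjMatrix ℝ = J - 1 - A := by
      ext a b
      by_cases hab : a = b
      · subst hab; simp [hA, hJ]
      · by_cases h : G.Adj a b <;> simp [hA, hJ, h, hab]
    have hc' : A ^ 2 = k • (1 : Matrix V V ℝ) + ℓ • A + μ • (J - 1 - A) := by
      rw [← hc, hA]
      convert h
    rw [← pow_two, hc']
    simp only [← Nat.cast_smul_eq_nsmul ℝ]
    module
  have hAJ : A * J = (k : ℝ) • J := by
    ext a b
    simp [hA, hJ, SimpleGraph.adjMatrix_mul_apply, hSRG.regular.degree_eq]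
  have hJA : J * A = (k : ℝ) • J := by
    ext a b
    simp [hA, hJ, SimpleGraph.mul_adjMatrix_apply, hSRG.regular.degree_eq]
  have hJJ : J * J = (v : ℝ) • J := by
    ext a b
    simp [hJ, Matrix.mul_apply, hSRG.card]
  have htA : A.trace = 0 := by rw [hA]; exact G.trace_adjMatrix ℝ
  have htJ : J.trace = v := by simp [hJ, Matrix.trace, hSRG.card]
  have ht1 : (1 : Matrix V V ℝ).trace = v := by rw [Matrix.trace_one, hSRG.card]
  have hμR : (0 : ℝ) < μ := by exact_mod_cast hμ
  have hkR : (0 : ℝ) < k := by exact_mod_cast hk0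
  have hkμR : (μ : ℝ) ≤ k := by exact_mod_cast hkμ
  have hℓkR : (ℓ : ℝ) < k := by exact_mod_cast hℓk
  have hkvR : (k : ℝ) + 2 ≤ v := by exact_mod_cast hkv
  have hvR : (0 : ℝ) < v := by linarith
  have hpar : (k : ℝ) * k = (ℓ - μ) * k + (k - μ) + v * μ := by
    have h : (A * A) * J = ((k : ℝ) * k) • J := by
      rw [mul_assoc, hAJ, Matrix.mul_smul, hAJ, smul_smul]
    rw [hsq] at h
    simp only [add_mul, Matrix.smul_mul, hAJ, hJJ, one_mul, smul_smul] at h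
    have := congrFun (congrFun h u) u
    simp [hJ] at this
    linarith
  have hrad : 0 < ((ℓ : ℝ) - μ) ^ 2 + 4 * ((k : ℝ) - μ) := by
    rcases hkμR.lt_or_eq with h | h
    · have := sq_nonneg ((ℓ : ℝ) - μ)
      linarith
    · have : (ℓ : ℝ) - μ ≠ 0 := by linarith
      have := pow_pos (abs_pos.2 this) 2
      rw [sq_abs] at this
      linarith
  have hδ0 : 0 < δ := by rw [hδ]; exact Real.sqrt_pos.2 hrad
  have hδ2 : δ ^ 2 = ((ℓ : ℝ) - μ) ^ 2 + 4 * ((k : ℝ) - μ) := by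
    rw [hδ]; exact Real.sq_sqrt hrad.le
  have hsum : (ℓ : ℝ) - μ = r + s := by rw [hr, hs]; ring
  have hprod : (k : ℝ) - μ = - (r * s) := by rw [hr, hs]; linarith
  have hrs : r - s = δ := by rw [hr, hs]; ring
  have hr0 : 0 ≤ r := by
    have : |(ℓ : ℝ) - μ| ≤ δ := by
      apply abs_le_of_sq_le_sq _ hδ0.le
      linarith
    have := neg_abs_le ((ℓ : ℝ) - μ)
    rw [hr]; linarith
  rw [hsum, hprod] at hsq hpar
  have hfac : ((k : ℝ) - r) * (k - s) = v * μ := by linarith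
  have hvμ : (0 : ℝ) < v * μ := by positivity
  have hkr : (k : ℝ) ≠ r := by
    rintro h; rw [h] at hfac; simp at hfac; rcases hfac with h | h <;> linarith
  have hks : (k : ℝ) ≠ s := by
    rintro h; rw [h] at hfac; simp at hfac; rcases hfac with h | h <;> linarith
  have hrs0 : r - s ≠ 0 := by rw [hrs]; exact hδ0.ne'
  -- eigenvectors
  have hJx : ∀ (t : ℝ) (x : V → ℝ), A.mulVec x = t • x → (k : ℝ) ≠ t → J.mulVec x = 0 := by
    intro t x hx hkt
    have h : (J * A).mulVec x = t • J.mulVec x := by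
      rw [← Matrix.mulVec_mulVec, hx, Matrix.mulVec_smul]
    rw [hJA, Matrix.smul_mulVec] at h
    have h2 : ((k : ℝ) - t) • J.mulVec x = 0 := by rw [sub_smul, h, sub_self]
    exact (smul_eq_zero.1 h2).resolve_left (sub_ne_zero.2 hkt)
  have hquad : ∀ (t : ℝ) (x : V → ℝ), A.mulVec x = t • x →
      ((t - r) * (t - s)) • x = (μ : ℝ) • J.mulVec x := by
    intro t x hx
    have h : (A * A).mulVec x = (t * t) • x := by
      rw [← Matrix.mulVec_mulVec, hx, Matrix.mulVec_smul, hx, smul_smul]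
    rw [hsq] at h
    simp only [Matrix.add_mulVec, Matrix.smul_mulVec, Matrix.one_mulVec, hx] at h
    have : (μ : ℝ) • J.mulVec x = (t * t) • x - (r + s) • t • x - (-(r * s)) • x := by
      rw [← h]; module
    rw [this]; module
  have gen : ∀ a b : ℝ, a + b = r + s → a * b = r * s → a - b ≠ 0 → (k : ℝ) ≠ a →
      (Module.finrank ℝ (adjEigenspace G a) : ℝ) = (-b * (v - 1) - k) / (a - b) := by
    intro a b hab hab' hne hka
    rw [aux_eig G a ((a - b)⁻¹ • (A - b • 1 - (((k : ℝ) - b) * (v : ℝ)⁻¹) • J))]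
    · simp only [Matrix.trace_smul, Matrix.trace_sub, htA, htJ, ht1, smul_eq_mul]
      field_simp
      ring
    · rw [← hA, Matrix.mul_smul, smul_comm a]
      congr 1
      simp only [mul_sub, Matrix.mul_smul, hAJ, mul_one, hsq, ← hab, ← hab']
      have e : (μ : ℝ) = ((k : ℝ) - b) * (v : ℝ)⁻¹ * (k - a) := by
        have : ((k : ℝ) - a) * (k - b) = v * μ := by
          rw [← hfac]; linear_combination (-(k : ℝ)) * hab + hab'
        field_simp
        linarith
      rw [e]
      module
    · intro x hx
      rw [← hA] at hx
      simp only [Matrix.smul_mulVec, Matrix.sub_mulVec, Matrix.one_mulVec, hx, hJx a x hx hka,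
        smul_zero, sub_zero]
      rw [← sub_smul, smul_smul, inv_mul_cancel₀ hne, one_smul]
  have Hr := gen r s rfl rfl hrs0 hkr
  have Hs := gen s r (add_comm _ _) (mul_comm _ _) (by rw [← neg_sub]; exact neg_ne_zero.2 hrs0) hks
  have Hk : (Module.finrank ℝ (adjEigenspace G (k : ℝ)) : ℝ) = 1 := by
    rw [aux_eig G k ((v : ℝ)⁻¹ • J)]
    · rw [Matrix.trace_smul, htJ, smul_eq_mul, inv_mul_cancel₀ hvR.ne']
    · rw [← hA, Matrix.mul_smul, hAJ, smul_comm]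
    · intro x hx
      rw [← hA] at hx
      have h := hquad k x hx
      rw [hfac, mul_comm, mul_smul] at h
      have h' := smul_right_injective _ hμR.ne' h
      rw [Matrix.smul_mulVec, ← h', smul_smul, inv_mul_cancel₀ hvR.ne', one_smul]
  refine ⟨?_, by exact_mod_cast Hk, ?_, ?_⟩
  · intro t
    constructor
    · rintro ⟨x, hx0, hx⟩
      rw [← hA] at hx
      by_cases hkt : t = k
      · exact Or.inl hkt
      · right
        have h := hquad t x hx
        rw [hJx t x hx (Ne.symm hkt), smul_zero] at h
        have := (smul_eq_zero.1 h).resolve_right hx0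
        rcases mul_eq_zero.1 this with h | h
        · exact Or.inl (sub_eq_zero.1 h)
        · exact Or.inr (sub_eq_zero.1 h)
    · rintro (ht | ht | ht) <;> rw [ht]
      · exact aux_iff G _ (by rw [Hk]; exact one_ne_zero)
      · apply aux_iff
        rw [Hr]
        refine div_ne_zero ?_ hrs0
        intro h0
        have e1 : (v : ℝ) * (-s * (k - r) - μ) = 0 := by
          linear_combination hfac + (k - r) * h0
        have e2 := (mul_eq_zero.1 e1).resolve_left hvR.ne'
        have e3 : (k : ℝ) * (s + 1) = 0 := by linear_combination hprod - e2
        have e4 := (mul_eq_zero.1 e3).resolve_left hkR.ne'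
        have e5 : s = -1 := by linarith
        rw [e5] at h0
        linarith
      · apply aux_iff
        rw [Hs]
        refine div_ne_zero ?_ (by rw [← neg_sub]; exact neg_ne_zero.2 hrs0)
        have : 0 ≤ r * ((v : ℝ) - 1) := mul_nonneg hr0 (by linarith)
        intro h
        linarith
  · rw [Hr, hrs, hf, hΔ, hs]
    field_simp
    ring
  · rw [Hs, ← neg_sub r s, hrs, hg, hΔ, hr]
    field_simp
    ring
end

section
/- Let G be a connected, non-complete strongly regular graph with parameters (v, k, λ, μ) with μ > 0. Set δ = √((λ−μ)^2 + 4(k−μ)), r = (λ−μ+δ)/2, Δ = ((v−1)(μ−λ) − 2k)/δ and f = (v−1+Δ)/2 (a natural number, the multiplicity of the eigenvalue r). Then there exists an injective map φ from the vertex set of G to the unit sphere of EuclideanSpace ℝ (Fin f) such that the inner product ⟪φ(u), φ(v)⟫ equals r/k whenever u and v are adjacent, and equals −(r+1)/(v−k−1) whenever u ≠ v are non-adjacent. -/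
open scoped Classical

/-- A symmetric idempotent real matrix of trace `f` is a Gram matrix of vectors in dimension `f`. -/
lemma gram_of_idempotent {V : Type*} [Fintype V] (E : Matrix V V ℝ) (hs : E.IsSymm)
    (hE : E * E = E) (f : ℕ) (ht : E.trace = f) :
    ∃ φ : V → EuclideanSpace ℝ (Fin f), ∀ u w, (inner ℝ (φ u) (φ w) : ℝ) = E u w := by
  set T : EuclideanSpace ℝ V →ₗ[ℝ] EuclideanSpace ℝ V := Matrix.toEuclideanLin E with hT
  have hTT : ∀ x, T (T x) = T x := by
    intro x
    simp [hT, Matrix.toEuclideanLin_apply, Matrix.mulVec_mulVec, hE]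
  have hproj : LinearMap.IsProj (LinearMap.range T) T := by
    refine ⟨fun x => ⟨x, rfl⟩, ?_⟩
    rintro _ ⟨y, rfl⟩
    exact hTT y
  have htr : LinearMap.trace ℝ _ T = E.trace := by
    rw [hT, Matrix.toEuclideanLin_eq_toLin, Matrix.trace_toLin_eq]
  have hrank : Module.finrank ℝ (LinearMap.range T) = f := by
    have := hproj.trace
    rw [htr, ht] at this
    exact_mod_cast this.symm
  let b := (stdOrthonormalBasis ℝ (LinearMap.range T)).reindex (finCongr hrank)
  refine ⟨fun u => b.repr ⟨T (EuclideanSpace.single u 1), ⟨_, rfl⟩⟩, ?_⟩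
  intro u w
  rw [LinearIsometryEquiv.inner_map_map, Submodule.coe_inner]
  have hE' := congrFun (congrFun hE u) w
  rw [Matrix.mul_apply] at hE'
  rw [← hE']
  simp only [hT, Matrix.toEuclideanLin_apply, PiLp.inner_apply]
  refine Finset.sum_congr rfl fun i _ => ?_
  simp [hs.apply, mul_comm]

/-- Parameter facts. -/
lemma srg_params {V : Type*} [Fintype V]
    (G : SimpleGraph V) (v k ℓ μ : ℕ)
    (hSRG : G.IsSRGWith v k ℓ μ) (hnc : G ≠ ⊤) (hμ : 0 < μ) :
    μ ≤ k ∧ ℓ < k ∧ k + 1 < v ∧ k * (k - ℓ - 1) = (v - k - 1) * μ := by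
  obtain ⟨a, b, hab, hna⟩ := SimpleGraph.ne_top_iff_exists_not_adj.mp hnc
  have h1 : μ ≤ k := by
    rw [← hSRG.of_not_adj hab hna, ← hSRG.regular a]
    exact G.card_commonNeighbors_le_degree_left a b
  have hd : 0 < G.degree a := by rw [hSRG.regular a]; omega
  obtain ⟨c, hc⟩ := (G.degree_pos_iff_exists_adj a).mp hd
  have h2 : ℓ < k := by
    rw [← hSRG.of_adj a c hc, ← hSRG.regular a]
    exact hc.card_commonNeighbors_lt_degree
  have h3 : 0 < v - k - 1 := by
    rw [← hSRG.compl_is_regular a]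
    exact (Gᶜ.degree_pos_iff_exists_adj a).mpr ⟨b, by simp [hab, hna]⟩
  exact ⟨h1, h2, by omega, hSRG.param_eq G (by omega)⟩


set_option maxHeartbeats 1000000

/-- A connected non-complete strongly regular graph with parameters
`(v, k, λ, μ)`, `μ > 0`, admits a spherical two-distance representation: an
injective map of its vertices to unit vectors of `EuclideanSpace ℝ (Fin f)`,
where `f = (v-1+Δ)/2` is the multiplicity of the eigenvalue `r`, with inner
product `r/k` on adjacent pairs and `-(r+1)/(v-k-1)` on distinct non-adjacent
pairs. -/
theorem srg_spherical_two_distance_representation {V : Type*} [Fintype V]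
    (G : SimpleGraph V) (v k ℓ μ : ℕ)
    (hSRG : G.IsSRGWith v k ℓ μ) (hconn : G.Connected) (hnc : G ≠ ⊤) (hμ : 0 < μ)
    (δ r Δ : ℝ) (f : ℕ)
    (hδ : δ = Real.sqrt (((ℓ : ℝ) - μ) ^ 2 + 4 * ((k : ℝ) - μ)))
    (hr : r = (((ℓ : ℝ) - μ) + δ) / 2)
    (hΔ : Δ = (((v : ℝ) - 1) * ((μ : ℝ) - ℓ) - 2 * k) / δ)
    (hf : (f : ℝ) = ((v : ℝ) - 1 + Δ) / 2) :
    ∃ φ : V → EuclideanSpace ℝ (Fin f),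
      Function.Injective φ ∧
      (∀ u, ‖φ u‖ = 1) ∧
      (∀ u w, G.Adj u w → (inner ℝ (φ u) (φ w) : ℝ) = r / k) ∧
      (∀ u w, u ≠ w → ¬G.Adj u w →
        (inner ℝ (φ u) (φ w) : ℝ) = -(r + 1) / ((v : ℝ) - k - 1)) := by
  obtain ⟨h1, h2, h3, hp⟩ := srg_params G v k ℓ μ hSRG hnc hμ
  have hpR : (k : ℝ) * (k - ℓ - 1) = (v - k - 1) * μ := by
    have e1 : ((k - ℓ - 1 : ℕ) : ℝ) = k - ℓ - 1 := by
      rw [Nat.sub_sub, Nat.cast_sub (by omega)]; push_cast; ring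
    have e2 : ((v - k - 1 : ℕ) : ℝ) = v - k - 1 := by
      rw [Nat.sub_sub, Nat.cast_sub (by omega)]; push_cast; ring
    rw [← e1, ← e2]; exact_mod_cast hp
  have h1R : (μ : ℝ) ≤ k := by exact_mod_cast h1
  have h2R : (ℓ : ℝ) + 1 ≤ k := by exact_mod_cast h2
  have h3R : (k : ℝ) + 1 < v := by exact_mod_cast h3
  have hμR : (0 : ℝ) < μ := by exact_mod_cast hμ
  have hk : (0 : ℝ) < k := by linarith
  have hv : (0 : ℝ) < v := by linarith
  have hpos : 0 < ((ℓ : ℝ) - μ) ^ 2 + 4 * ((k : ℝ) - μ) := by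
    rcases h1R.eq_or_lt with h | h
    · have : (ℓ : ℝ) - μ < 0 := by linarith
      nlinarith
    · nlinarith [sq_nonneg ((ℓ : ℝ) - μ)]
  have hδ0 : 0 < δ := by rw [hδ]; exact Real.sqrt_pos.mpr hpos
  have hδ2 : δ ^ 2 = ((ℓ : ℝ) - μ) ^ 2 + 4 * ((k : ℝ) - μ) := by
    rw [hδ]; exact Real.sq_sqrt hpos.le
  obtain ⟨s, hs⟩ : ∃ s : ℝ, s = (((ℓ : ℝ) - μ) - δ) / 2 := ⟨_, rfl⟩
  have hsum : r + s = ℓ - μ := by rw [hr, hs]; ring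
  have hdiff : r - s = δ := by rw [hr, hs]; ring
  have hprod : r * s = μ - k := by rw [hr, hs]; linear_combination (-1 / 4) * hδ2
  have hr0 : 0 ≤ r := by
    by_contra hneg
    push Not at hneg
    have : s < 0 := by linarith
    nlinarith [mul_pos_of_neg_of_neg hneg this]
  have hs0 : s ≤ 0 := by
    by_contra hneg
    push Not at hneg
    have : 0 < r := by linarith
    nlinarith [mul_pos this hneg]
  have hchar : (k - r) * (k - s) = μ * v := by
    linear_combination hprod - k * hsum + hpR
  have hks : 0 < k - s := by linarith
  have hrk : r < k := by
    have : 0 < (k - r) * (k - s) := by rw [hchar]; positivity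
    have := (pos_iff_pos_of_mul_pos this).mpr hks
    linarith
  have hfδ : f * δ = -s * (v - 1) - k := by
    rw [hf, hΔ, hs]; field_simp; ring
  have hna : (r + 1) * (f * δ) = (k - s) * (v - k - 1) := by
    rw [hfδ]
    linear_combination (-(v : ℝ) + 1) * hprod - k * hsum + hpR
  have hadj : r * (f * δ) = k * (v - k + s) := by
    rw [hfδ]
    linear_combination (-(v : ℝ) + 1) * hprod - k * hsum + hpR
  have hf0 : (0 : ℝ) < f := by
    have h : 0 < (r + 1) * (f * δ) := by
      rw [hna]; exact mul_pos hks (by linarith)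
    have := (pos_iff_pos_of_mul_pos h).mp (by linarith)
    exact (pos_iff_pos_of_mul_pos this).mpr hδ0
  -- the projection
  set A : Matrix V V ℝ := G.adjMatrix ℝ with hA
  set J : Matrix V V ℝ := Matrix.of fun _ _ => 1 with hJ
  have hAA : A * A = ((k : ℝ) - μ) • (1 : Matrix V V ℝ) + ((ℓ : ℝ) - μ) • A + (μ : ℝ) • J := by
    have h := hSRG.matrix_eq (α := ℝ)
    rw [pow_two] at h
    rw [hA, h]
    ext u w
    simp only [Matrix.add_apply, Matrix.smul_apply]
    by_cases huw : u = w
    · subst huw; simp [J]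
    · by_cases hadj : G.Adj u w <;> simp [J, huw, hadj]
  have hAJ : A * J = (k : ℝ) • J := by
    ext u w
    simp [hA, J, SimpleGraph.adjMatrix_mul_apply, hSRG.regular.degree_eq]
  have hJA : J * A = (k : ℝ) • J := by
    ext u w
    simp [hA, J, SimpleGraph.mul_adjMatrix_apply, hSRG.regular.degree_eq]
  have hJJ : J * J = (v : ℝ) • J := by
    ext u w
    simp [J, Matrix.mul_apply, hSRG.card]
  have hvk : (0 : ℝ) < v - k - 1 := by linarith
  obtain ⟨t, ht⟩ : ∃ t : ℝ, t = (k - s) / v := ⟨_, rfl⟩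
  have htv : t * v = k - s := by rw [ht]; field_simp
  have htμ : t * (k - r) = μ := by
    rw [ht]; field_simp; linear_combination hchar
  obtain ⟨E, hE⟩ : ∃ E : Matrix V V ℝ, E = δ⁻¹ • (A - s • 1 - t • J) := ⟨_, rfl⟩
  have hsymm : E.IsSymm := by
    rw [hE]
    ext u w
    simp [hA, J, SimpleGraph.adj_comm, Matrix.one_apply, eq_comm]
  have hidem : E * E = E := by
    have key : (A - s • 1 - t • J) * (A - s • 1 - t • J) = δ • (A - s • 1 - t • J) := by
      simp only [sub_mul, mul_sub, smul_mul_assoc, mul_smul_comm, one_mul, mul_one, hAA, hAJ,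
        hJA, hJJ]
      rw [← hdiff]
      have e1 : (ℓ : ℝ) = r + s + μ := by linarith
      have e2 : (k : ℝ) = μ - r * s := by linarith
      ext u w
      simp only [Matrix.sub_apply, Matrix.add_apply, Matrix.smul_apply, smul_eq_mul]
      linear_combination (A u w) * (-hsum) + (1 : Matrix V V ℝ) u w * hprod
        + J u w * (t * htv - htμ)
    rw [hE, smul_mul_smul_comm, key, smul_smul]
    congr 1
    field_simp
  have hval : ∀ u w, E u w = δ⁻¹ * (A u w - s * (1 : Matrix V V ℝ) u w - t) := by
    intro u w
    simp [hE, J]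
  have htrace : E.trace = f := by
    simp only [Matrix.trace, Matrix.diag_apply, hval]
    simp [hA, hSRG.card]
    field_simp
    linear_combination -hfδ - htv
  obtain ⟨φ, hφ⟩ := gram_of_idempotent E hsymm hidem f htrace
  obtain ⟨c, hc⟩ : ∃ c : ℝ, c = Real.sqrt (v / f) := ⟨_, rfl⟩
  have hcc : c * c = v / f := by rw [hc]; exact Real.mul_self_sqrt (by positivity)
  have hin : ∀ u w, (inner ℝ (c • φ u) (c • φ w) : ℝ) = v / f * E u w := by
    intro u w
    rw [real_inner_smul_left, real_inner_smul_right, hφ, ← mul_assoc, hcc]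
  have hdiag : ∀ u, (inner ℝ (c • φ u) (c • φ u) : ℝ) = 1 := by
    intro u
    rw [hin, hval]
    simp [hA]
    field_simp
    linear_combination -hfδ - htv
  have hone : ∀ u w, G.Adj u w → (inner ℝ (c • φ u) (c • φ w) : ℝ) = r / k := by
    intro u w huw
    rw [hin, hval]
    simp [hA, huw, huw.ne]
    field_simp
    linear_combination -hadj - k * htv
  have htwo : ∀ u w, u ≠ w → ¬G.Adj u w →
        (inner ℝ (c • φ u) (c • φ w) : ℝ) = -(r + 1) / ((v : ℝ) - k - 1) := by
    intro u w hne huw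
    rw [hin, hval]
    have hvk : (v : ℝ) - k - 1 ≠ 0 := by
      have : (0 : ℝ) < v - k - 1 := by linarith
      exact this.ne'
    have hA0 : A u w = 0 := by simp [hA, huw]
    rw [hA0, Matrix.one_apply_ne hne]
    field_simp
    linear_combination hna - (v - k - 1) * htv
  refine ⟨fun u => c • φ u, ?_, ?_, hone, htwo⟩
  · intro u w h
    by_contra hne
    have h' : c • φ u = c • φ w := h
    have h1' := hdiag w
    by_cases hadj' : G.Adj u w
    · have := hone u w hadj'
      rw [h', h1', eq_div_iff hk.ne'] at this
      linarith
    · have := htwo u w hne hadj'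
      rw [h', h1', eq_div_iff hvk.ne'] at this
      linarith
  · intro u
    have := hdiag u
    rw [real_inner_self_eq_norm_sq] at this
    exact (pow_eq_one_iff_of_nonneg (norm_nonneg _) two_ne_zero).mp this
end

section
/- Let q ≥ 3 be an odd natural number and let G be a connected strongly regular graph with parameters (q^3, (q+1)(q^2−1)/2, (q+3)(q^2−3)/4 + 1, (q+1)(q^2−1)/4). Then the least eigenvalue of the real adjacency matrix of G equals −(q+1)/2, and the chromatic number of G is at least q^2. -/
open scoped Classical

lemma aux_sq {V : Type*} [Fintype V] (G : SimpleGraph V) (n k l u : ℕ)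
    (h : G.IsSRGWith n k l u) (x : V → ℝ) (v : V) :
    (G.adjMatrix ℝ).mulVec ((G.adjMatrix ℝ).mulVec x) v =
      ((k : ℝ) - u) * x v + ((l : ℝ) - u) * (G.adjMatrix ℝ).mulVec x v + u * ∑ w, x w := by
  have h1 := h.matrix_eq (α := ℝ)
  have h2 : Gᶜ.adjMatrix ℝ = Matrix.of (fun _ _ => (1 : ℝ)) - 1 - G.adjMatrix ℝ := by
    ext a b
    by_cases hab : a = b
    · subst hab; simp
    · by_cases hG : G.Adj a b <;> simp [hab, hG]
  rw [h2] at h1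
  simp only [← Nat.cast_smul_eq_nsmul ℝ] at h1
  have h3 : (Matrix.of (fun _ _ => (1 : ℝ)) : Matrix V V ℝ).mulVec x v = ∑ w, x w := by
    simp [Matrix.mulVec, dotProduct]
  rw [Matrix.mulVec_mulVec, ← pow_two, h1]
  simp only [Matrix.add_mulVec, Matrix.sub_mulVec, Matrix.smul_mulVec, Matrix.one_mulVec,
    Pi.add_apply, Pi.sub_apply, Pi.smul_apply, h3, smul_eq_mul]
  ring

lemma aux_symm {V : Type*} [Fintype V] (G : SimpleGraph V) (x y : V → ℝ) :
    ∑ v, x v * (G.adjMatrix ℝ).mulVec y v = ∑ v, (G.adjMatrix ℝ).mulVec x v * y v := by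
  have := Matrix.dotProduct_mulVec x (G.adjMatrix ℝ) y
  rw [← Matrix.mulVec_transpose, SimpleGraph.transpose_adjMatrix] at this
  exact this

lemma aux_sum {V : Type*} [Fintype V] (G : SimpleGraph V) (k : ℕ)
    (h : G.IsRegularOfDegree k) (y : V → ℝ) :
    ∑ v, (G.adjMatrix ℝ).mulVec y v = k * ∑ v, y v := by
  have h1 := aux_symm G (fun _ => 1) y
  simp only [one_mul] at h1
  rw [h1, Finset.mul_sum]
  refine Finset.sum_congr rfl fun v _ => ?_
  congr 1
  have := SimpleGraph.adjMatrix_mulVec_const_apply_of_regular (α := ℝ) (a := 1) h (v := v)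
  simpa [Function.const_def] using this

lemma aux_indep {V : Type*} [Fintype V] (G : SimpleGraph V) (m : ℕ) (hm : 1 ≤ m)
    (hc : Fintype.card V = (2 * m + 1) ^ 3)
    (hsq : ∀ (x : V → ℝ) (v : V), (G.adjMatrix ℝ).mulVec ((G.adjMatrix ℝ).mulVec x) v =
      (2 * (m : ℝ) * (m + 1) ^ 2) * x v + ((2 * m - 1) * (m + 1)) * (G.adjMatrix ℝ).mulVec x v +
        (2 * (m : ℝ) * (m + 1) ^ 2) * ∑ w, x w)
    (hsum : ∀ y : V → ℝ, ∑ v, (G.adjMatrix ℝ).mulVec y v = (4 * (m : ℝ) * (m + 1) ^ 2) * ∑ v, y v)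
    (S : Finset V) (hS : ∀ a ∈ S, ∀ b ∈ S, ¬ G.Adj a b) : S.card ≤ 2 * m + 1 := by
  set x : V → ℝ := fun v => if v ∈ S then 1 else 0 with hx
  set y := (G.adjMatrix ℝ).mulVec x with hy
  have hsx : ∑ v, x v = S.card := by simp [hx]
  have hxx : ∑ v, x v * x v = S.card := by simp [hx]
  have hxy : ∑ v, x v * y v = 0 := by
    refine Finset.sum_eq_zero fun v _ => ?_
    by_cases hv : v ∈ S
    · have : y v = 0 := by
        rw [hy, SimpleGraph.adjMatrix_mulVec_apply]
        refine Finset.sum_eq_zero fun w hw => ?_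
        rw [SimpleGraph.mem_neighborFinset] at hw
        have : w ∉ S := fun hwS => hS v hv w hwS hw
        simp [hx, this]
      simp [this]
    · simp [hx, hv]
  have hsy : ∑ v, y v = (4 * (m : ℝ) * (m + 1) ^ 2) * S.card := by rw [hsum, hsx]
  have hyy : ∑ v, y v * y v = (2 * (m : ℝ) * (m + 1) ^ 2) * (S.card + S.card ^ 2) := by
    have h1 := aux_symm G x y
    rw [← hy] at h1
    rw [← h1]
    have : ∀ v, x v * (G.adjMatrix ℝ).mulVec y v = (2 * (m : ℝ) * (m + 1) ^ 2) * (x v * x v)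
        + ((2 * m - 1) * (m + 1)) * (x v * y v) + (2 * (m : ℝ) * (m + 1) ^ 2) * S.card * x v := by
      intro v
      rw [hy, hsq, hsx]; ring
    simp_rw [this, Finset.sum_add_distrib, ← Finset.mul_sum, hxx, hxy, hsx]
    ring
  have hcs := sq_sum_le_card_mul_sum_sq (s := Finset.univ) (f := fun v => y v + (m + 1) * x v)
  have e1 : ∑ v, (y v + ((m : ℝ) + 1) * x v) = (4 * (m : ℝ) * (m + 1) ^ 2 + (m + 1)) * S.card := by
    rw [Finset.sum_add_distrib, ← Finset.mul_sum, hsy, hsx]; ring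
  have e2 : ∑ v, (y v + ((m : ℝ) + 1) * x v) ^ 2 =
      (2 * (m : ℝ) * (m + 1) ^ 2) * (S.card + S.card ^ 2) + (m + 1) ^ 2 * S.card := by
    have : ∀ v, (y v + ((m : ℝ) + 1) * x v) ^ 2 =
      y v * y v + 2 * (m + 1) * (x v * y v) + (m + 1) ^ 2 * (x v * x v) := fun v => by ring
    simp_rw [this, Finset.sum_add_distrib, ← Finset.mul_sum, hxx, hxy, hyy]
    ring
  rw [e1, e2, Finset.card_univ, hc] at hcs
  push_cast at hcs
  have hm' : (1 : ℝ) ≤ m := by exact_mod_cast hm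
  by_contra hcon
  push Not at hcon
  have hcon' : (2 * (m : ℝ) + 1) < S.card := by exact_mod_cast hcon
  generalize (S.card : ℝ) = c at *
  have hpos : 0 < ((m : ℝ) + 1) ^ 2 * (2 * m + 1) ^ 3 * c * (c - (2 * m + 1)) := by
    have : 0 < c - (2 * m + 1) := by linarith
    have : 0 < c := by linarith
    positivity
  nlinarith [hcs, hpos]

/-- For odd `q ≥ 3`, a connected strongly regular graph with parameters
`(q³, (q+1)(q²-1)/2, (q+3)(q²-3)/4 + 1, (q+1)(q²-1)/4)` (the complements of
Hubaut's C20 family) has least adjacency eigenvalue `-(q+1)/2` and chromatic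
number at least `q²`. -/
theorem hubaut_C20_least_eigenvalue_chromatic {V : Type*} [Fintype V]
    (G : SimpleGraph V) (q : ℕ) (hq : 3 ≤ q) (hodd : Odd q)
    (hconn : G.Connected)
    (hSRG : G.IsSRGWith (q ^ 3) ((q + 1) * (q ^ 2 - 1) / 2)
      ((q + 3) * (q ^ 2 - 3) / 4 + 1) ((q + 1) * (q ^ 2 - 1) / 4)) :
    (IsAdjEigenvalue G (-(((q : ℝ) + 1) / 2)) ∧
      ∀ t : ℝ, IsAdjEigenvalue G t → -(((q : ℝ) + 1) / 2) ≤ t) ∧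
    ((q ^ 2 : ℕ) : ℕ∞) ≤ G.chromaticNumber := by
  obtain ⟨m, rfl⟩ := hodd
  have hm : 1 ≤ m := by omega
  have hm' : (1 : ℝ) ≤ m := by exact_mod_cast hm
  have ek : (2 * m + 1 + 1) * ((2 * m + 1) ^ 2 - 1) / 2 = 4 * m * (m + 1) ^ 2 := by
    have : (2 * m + 1) ^ 2 - 1 = 4 * m * (m + 1) := by
      rw [Nat.sub_eq_iff_eq_add (Nat.one_le_pow _ _ (by omega))]; ring
    rw [this]
    exact Nat.div_eq_of_eq_mul_left (by norm_num) (by ring)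
  have eu : (2 * m + 1 + 1) * ((2 * m + 1) ^ 2 - 1) / 4 = 2 * m * (m + 1) ^ 2 := by
    have : (2 * m + 1) ^ 2 - 1 = 4 * m * (m + 1) := by
      rw [Nat.sub_eq_iff_eq_add (Nat.one_le_pow _ _ (by omega))]; ring
    rw [this]
    exact Nat.div_eq_of_eq_mul_left (by norm_num) (by ring)
  have el : (((2 * m + 1 + 3) * ((2 * m + 1) ^ 2 - 3) / 4 + 1 : ℕ) : ℝ)
      = (m + 2) * (2 * m ^ 2 + 2 * m - 1) + 1 := by
    obtain ⟨j, rfl⟩ : ∃ j, m = j + 1 := ⟨m - 1, by omega⟩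
    have : (2 * (j + 1) + 1) ^ 2 - 3 = 2 * (2 * j ^ 2 + 6 * j + 3) := by
      have : (2 * (j + 1) + 1) ^ 2 = 2 * (2 * j ^ 2 + 6 * j + 3) + 3 := by ring
      omega
    rw [this, Nat.div_eq_of_eq_mul_left (n := 4) (k := (j + 3) * (2 * j ^ 2 + 6 * j + 3))
      (by norm_num) (by ring)]
    push_cast
    ring
  have hsq : ∀ (x : V → ℝ) (v : V), (G.adjMatrix ℝ).mulVec ((G.adjMatrix ℝ).mulVec x) v =
      (2 * (m : ℝ) * (m + 1) ^ 2) * x v + ((2 * m - 1) * (m + 1)) * (G.adjMatrix ℝ).mulVec x v +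
        (2 * (m : ℝ) * (m + 1) ^ 2) * ∑ w, x w := by
    intro x v
    rw [aux_sq G _ _ _ _ hSRG x v, el, ek, eu]
    push_cast
    ring
  have hsum : ∀ y : V → ℝ,
      ∑ v, (G.adjMatrix ℝ).mulVec y v = (4 * (m : ℝ) * (m + 1) ^ 2) * ∑ v, y v := by
    intro y
    rw [aux_sum G _ hSRG.regular y, ek]
    push_cast
    ring
  have hcard := hSRG.card
  clear hSRG el ek eu
  have hs : -((((2 * m + 1 : ℕ) : ℝ) + 1) / 2) = -((m : ℝ) + 1) := by push_cast; ring
  rw [hs]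
  refine ⟨⟨?_, ?_⟩, ?_⟩
  · have hlt : 1 < Fintype.card V := by
      rw [hcard]; exact Nat.one_lt_pow (by norm_num) (by omega)
    obtain ⟨a, b, hab⟩ := Fintype.one_lt_card_iff.mp hlt
    set e : V → ℝ := Pi.single a 1 - Pi.single b 1 with he
    have hse : ∑ v, e v = 0 := by simp [he]
    refine ⟨(G.adjMatrix ℝ).mulVec e - (2 * (m : ℝ) * (m + 1)) • e, ?_, ?_⟩
    · intro h0
      have h1 := congrFun h0 a
      have h2 : (G.adjMatrix ℝ).mulVec e a = - G.adjMatrix ℝ a b := by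
        simp [he, Matrix.mulVec_sub]
      have h3 : e a = 1 := by simp [he, hab]
      rw [Pi.sub_apply, Pi.smul_apply, h2, h3, SimpleGraph.adjMatrix_apply] at h1
      simp only [smul_eq_mul, Pi.zero_apply] at h1
      split_ifs at h1 <;> nlinarith
    · ext v
      rw [Matrix.mulVec_sub, Matrix.mulVec_smul]
      simp only [Pi.sub_apply, Pi.smul_apply, smul_eq_mul, hsq, hse]
      ring
  · rintro t ⟨x, hx0, hx⟩
    by_contra hlt
    push Not at hlt
    have hS : ∑ v, x v = 0 := by
      have h1 := hsum x
      rw [hx] at h1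
      simp only [Pi.smul_apply, smul_eq_mul, ← Finset.mul_sum] at h1
      have h2 : (t - 4 * (m : ℝ) * (m + 1) ^ 2) * ∑ v, x v = 0 := by linarith
      rcases mul_eq_zero.mp h2 with h | h
      · have : 0 ≤ 4 * (m : ℝ) * (m + 1) ^ 2 := by positivity
        linarith
      · exact h
    apply hx0
    ext v
    have h1 := hsq x v
    rw [hx, Matrix.mulVec_smul, hx, hS] at h1
    simp only [Pi.smul_apply, smul_eq_mul] at h1
    have h2 : ((t + (m + 1)) * (t - 2 * m * (m + 1))) * x v = 0 := by linarith
    have h3 : 0 < (t + (m + 1)) * (t - 2 * (m : ℝ) * (m + 1)) := by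
      apply mul_pos_of_neg_of_neg
      · linarith
      · have : 0 ≤ 2 * (m : ℝ) * (m + 1) := by positivity
        linarith
    exact (mul_eq_zero.mp h2).resolve_left h3.ne'
  · rw [SimpleGraph.le_chromaticNumber_iff_colorable]
    intro n hn
    obtain ⟨C⟩ := hn
    have h1 : (Finset.univ : Finset V).card ≤ (2 * m + 1) * (Finset.univ : Finset (Fin n)).card := by
      refine Finset.card_le_mul_card_image_of_maps_to (f := C) (fun _ _ => Finset.mem_univ _) _ ?_
      intro c _
      apply aux_indep G m hm hcard hsq hsum
      intro a ha b hb hadj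
      simp only [Finset.mem_filter, Finset.mem_univ, true_and] at ha hb
      exact C.valid hadj (ha.trans hb.symm)
    rw [Finset.card_univ, hcard, Finset.card_univ, Fintype.card_fin] at h1
    have : (2 * m + 1) * (2 * m + 1) ^ 2 ≤ (2 * m + 1) * n := by
      calc _ = (2 * m + 1) ^ 3 := by ring
        _ ≤ _ := h1
    exact Nat.le_of_mul_le_mul_left this (by omega)
end

section
/- For every prime power q, there exists a finite family of closed balls in EuclideanSpace ℝ (Fin (q^3 − q^2 + q + 1)) with positive radii and pairwise disjoint interiors (dist(c_i,c_j) ≥ r_i + r_j for i ≠ j) whose tangency graph (i ~ j iff i ≠ j and dist(c_i,c_j) = r_i + r_j) has chromatic number exactly q^3 + 3. -/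
/-- The tangency graph of a family of balls with centers `c` and radii `r`:
two indices are adjacent iff they are distinct and the corresponding balls are
tangent. -/
def tangencyGraph {d n : ℕ} (c : Fin n → EuclideanSpace ℝ (Fin d)) (r : Fin n → ℝ) :
    SimpleGraph (Fin n) where
  Adj i j := i ≠ j ∧ dist (c i) (c j) = r i + r j
  symm := by
    constructor
    rintro i j ⟨hij, h⟩
    exact ⟨hij.symm, by rwa [dist_comm, add_comm]⟩
  loopless := by
    constructor
    rintro i ⟨h, -⟩
    exact h rfl

open Finset
set_option linter.unusedSectionVars false
set_option linter.unusedVariables false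

open Classical in
/-- indicator of a proposition -/
noncomputable def ind (p : Prop) : ℝ := if p then 1 else 0

lemma ind_pos {p : Prop} (h : p) : ind p = 1 := by simp [ind, h]
lemma ind_neg {p : Prop} (h : ¬ p) : ind p = 0 := by simp [ind, h]

/-- number of elements with a property, as a real number -/
noncomputable def cnt {V : Type*} [Fintype V] (p : V → Prop) : ℝ := ∑ z, ind (p z)

lemma sum_ind {V : Type*} [Fintype V] (p : V → Prop) : ∑ z, ind (p z) = cnt p := rfl

lemma cnt_card {V : Type*} [Fintype V] (p : V → Prop) [DecidablePred p] :
    cnt p = (#{z : V | p z} : ℝ) := by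
  rw [cnt, ← Finset.sum_boole]
  refine Finset.sum_congr rfl fun z _ => ?_
  by_cases h : p z <;> simp [ind, h]

lemma cnt_congr {V : Type*} [Fintype V] {p r : V → Prop} (h : ∀ z, p z ↔ r z) :
    cnt p = cnt r := by
  have : p = r := funext fun z => propext (h z)
  rw [this]

lemma cnt_split {V : Type*} [Fintype V] (p r : V → Prop) :
    cnt p = (cnt fun z => r z ∧ p z) + (cnt fun z => ¬ r z ∧ p z) := by
  rw [cnt, cnt, cnt, ← Finset.sum_add_distrib]
  refine Finset.sum_congr rfl fun z _ => ?_
  by_cases h : p z <;> by_cases h' : r z <;> simp [ind, h, h']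

lemma cnt_true {V : Type*} [Fintype V] : cnt (fun _ : V => True) = Fintype.card V := by
  simp [cnt, ind]

/-- Shifting along a direction: the function `g` restricted to each line in direction `x` is affine
with nonzero slope. -/
lemma bp_shift {F V : Type*} [Field F] [Fintype F] [AddCommGroup V] [Module F V] [Fintype V]
    (x : V) (p : V → Prop) (g c : V → F)
    (hp : ∀ z (t : F), p z → p (z + t • x))
    (hg : ∀ z (t : F), p z → g (z + t • x) = g z + t * c z)
    (hc : ∀ z (t : F), p z → c (z + t • x) = c z)
    (hc0 : ∀ z, p z → c z ≠ 0) :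
    (cnt fun z : V => p z ∧ g z = 0) * Fintype.card F = (cnt fun z : V => p z) := by
  classical
  rw [cnt_card, cnt_card, ← Finset.card_univ (α := F), ← Nat.cast_mul, ← Finset.card_product]
  congr 1
  refine Finset.card_bij' (fun a _ => a.1 + a.2 • x)
    (fun z _ => (z + (-(g z / c z)) • x, g z / c z)) ?_ ?_ ?_ ?_
  · rintro ⟨z, t⟩ h
    simp only [mem_product, mem_filter, mem_univ, true_and, and_true] at h ⊢
    exact hp z t h.1
  · intro z h
    simp only [mem_product, mem_filter, mem_univ, true_and, and_true] at h ⊢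
    refine ⟨hp z _ h, ?_⟩
    rw [hg z _ h]
    have := hc0 z h
    field_simp
    ring
  · rintro ⟨z, t⟩ h
    simp only [mem_product, mem_filter, mem_univ, true_and, and_true] at h ⊢
    have h0 := hc0 z h.1
    have : g (z + t • x) / c (z + t • x) = t := by
      rw [hg z _ h.1, hc z _ h.1, h.2]
      field_simp
      ring
    rw [this]
    simp
  · intro z h
    simp

/-- A finite quadratic space of elliptic type, of dimension six. -/
structure EllSpace (F V : Type*) [Field F] [AddCommGroup V] [Module F V] where
  /-- the polar form -/
  B : V →ₗ[F] V →ₗ[F] F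
  /-- the quadratic form -/
  Q : V → F
  symm : ∀ x y, B x y = B y x
  polar : ∀ z x (t : F), Q (z + t • x) = Q z + t * B x z + t ^ 2 * Q x
  nondeg : ∀ x, x ≠ 0 → Q x = 0 → ∃ y, B x y ≠ 0

namespace EllSpace

variable {F V : Type*} [Field F] [Fintype F] [AddCommGroup V] [Module F V] [Fintype V]
  (E : EllSpace F V)

lemma Q_zero_smul (t : F) (x : V) (hx : E.Q x = 0) (h0 : E.Q 0 = 0) : E.Q (t • x) = 0 := by
  have := E.polar 0 x t
  simpa [hx, h0] using this

lemma Q_zero [Nonempty F] : E.Q 0 = 0 := by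
  have := E.polar 0 0 1
  simpa using this

lemma B_self (x : V) (hx : E.Q x = 0) : E.B x x = 0 := by
  have h1 := E.polar x x 1
  have h2 := E.polar x x (-1)
  have h3 := E.Q_zero
  simp [hx, h3] at h2
  exact h2

lemma card_ker (x : V) (hx : x ≠ 0) (hQ : E.Q x = 0) :
    (cnt fun z : V => E.B x z = 0) * Fintype.card F = Fintype.card V := by
  obtain ⟨y, hy⟩ := E.nondeg x hx hQ
  have := bp_shift y (fun _ => True) (fun z => E.B x z) (fun _ => E.B x y)
    (by simp) (by simp) (by simp) (by simpa using hy)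
  simpa only [true_and, cnt_true] using this

lemma card_compl (x : V) (p : V → Prop) :
    cnt p = (cnt fun z : V => p z ∧ E.B x z = 0) + (cnt fun z : V => p z ∧ E.B x z ≠ 0) := by
  rw [cnt_split p (fun z => E.B x z = 0)]
  simp only [and_comm, ne_eq]

lemma card_compl' (x : V) (p : V → Prop) :
    cnt p = (cnt fun z : V => E.B x z = 0 ∧ p z) + (cnt fun z : V => E.B x z ≠ 0 ∧ p z) :=
  cnt_split p (fun z => E.B x z = 0)

/-- singular vectors not orthogonal to `x` -/
lemma card_sing_not (x : V) (hQ : E.Q x = 0) :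
    (cnt fun z : V => E.B x z ≠ 0 ∧ E.Q z = 0) * Fintype.card F = (cnt fun z : V => E.B x z ≠ 0) :=
  bp_shift x (fun z => E.B x z ≠ 0) E.Q (fun z => E.B x z)
    (by intro z t h; simpa [E.B_self x hQ] using h)
    (by intro z t h; rw [E.polar, hQ]; ring)
    (by intro z t h; simp [E.B_self x hQ])
    (by intro z h; exact h)

lemma card_L1 (x : V) (hx : x ≠ 0) (hQ : E.Q x = 0) (q : ℝ) (hq : q = Fintype.card F)
    (hq0 : q ≠ 0) (hV : (Fintype.card V : ℝ) = q ^ 6)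
    (hS : (cnt fun z : V => E.Q z = 0) = q ^ 5 - q ^ 3 + q ^ 2) :
    (cnt fun z : V => E.B x z = 0 ∧ E.Q z = 0) = q ^ 4 - q ^ 3 + q ^ 2 := by
  have h1 := E.card_ker x hx hQ
  have h2 := E.card_sing_not x hQ
  have h3 := E.card_compl' x (fun z => E.Q z = 0)
  have h4 := E.card_compl x (fun z => True)
  simp only [true_and, cnt_true] at h4
  rw [← hq] at h1 h2
  rw [hV] at h1 h4
  rw [hS] at h3
  have h5 : (cnt fun z : V => E.B x z = 0) = q ^ 5 := by
    apply mul_right_cancel₀ hq0; rw [h1]; ring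
  have h6 : (cnt fun z : V => E.B x z ≠ 0 ∧ E.Q z = 0) = q ^ 5 - q ^ 4 := by
    apply mul_right_cancel₀ hq0; rw [h2]; linarith
  linarith

lemma card_L2 (x y : V) (hx : x ≠ 0) (hQ : E.Q x = 0)
    (hxy : E.B x y ≠ 0) (q : ℝ) (hq : q = Fintype.card F)
    (hq0 : q ≠ 0) (hV : (Fintype.card V : ℝ) = q ^ 6)
    (hS : (cnt fun z : V => E.Q z = 0) = q ^ 5 - q ^ 3 + q ^ 2) :
    (cnt fun z : V => (E.B x z = 0 ∧ E.Q z = 0) ∧ E.B y z = 0) = q ^ 3 - q ^ 2 + q := by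
  have h1 := E.card_L1 x hx hQ q hq hq0 hV hS
  have h2 := bp_shift x (fun z => E.B x z = 0 ∧ E.Q z = 0) (fun z => E.B y z) (fun _ => E.B y x)
    (by rintro z t ⟨h, h'⟩; simp [E.B_self x hQ, E.polar, h, h', hQ])
    (by simp) (by simp) (by intro _ _; rwa [E.symm])
  rw [← hq, h1] at h2
  apply mul_right_cancel₀ hq0; rw [h2]; ring

lemma exists_sep (x y : V) (hx : x ≠ 0) (hQ : E.Q x = 0) (hQy : E.Q y = 0)
    (hxy : E.B x y = 0) (hind : ∀ t : F, y ≠ t • x) : ∃ w, E.B x w = 0 ∧ E.B y w ≠ 0 := by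
  by_contra! hcon
  obtain ⟨w, hw⟩ := E.nondeg x hx hQ
  set a := E.B y w / E.B x w with ha
  have hs : E.Q (y + (-a) • x) = 0 := by rw [E.polar, hQ, hQy, hxy]; ring
  obtain ⟨v, hv⟩ := E.nondeg (y + (-a) • x)
    (by intro h; apply hind a; rw [neg_smul, add_neg_eq_zero] at h; exact h) hs
  apply hv
  have h3 := hcon (v + (-(E.B x v / E.B x w)) • w) (by simp; field_simp; ring)
  simp at h3
  simp [ha]
  field_simp at h3 ⊢
  linear_combination h3

lemma card_L3 (x y : V) (hx : x ≠ 0) (hQ : E.Q x = 0) (hQy : E.Q y = 0)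
    (hxy : E.B x y = 0) (hind : ∀ t : F, y ≠ t • x) (q : ℝ) (hq : q = Fintype.card F)
    (hq0 : q ≠ 0) (hV : (Fintype.card V : ℝ) = q ^ 6)
    (hS : (cnt fun z : V => E.Q z = 0) = q ^ 5 - q ^ 3 + q ^ 2) :
    (cnt fun z : V => (E.B x z = 0 ∧ E.Q z = 0) ∧ E.B y z = 0) = q ^ 2 := by
  have h1 := E.card_L1 x hx hQ q hq hq0 hV hS
  have h2 := bp_shift y (fun z => E.B x z = 0 ∧ E.B y z ≠ 0) E.Q (fun z => E.B y z)
    (by rintro z t ⟨h, h'⟩; simp [E.B_self y hQy, h, h', hxy])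
    (by intro z t h; rw [E.polar, hQy]; ring)
    (by intro z t h; simp [E.B_self y hQy])
    (by intro z h; exact h.2)
  obtain ⟨w, hw, hw'⟩ := E.exists_sep x y hx hQ hQy hxy hind
  have h3 := bp_shift w (fun z => E.B x z = 0) (fun z => E.B y z) (fun _ => E.B y w)
    (by intro z t h; simp [h, hw])
    (by simp) (by simp) (by intro _ _; exact hw')
  have h4 := E.card_compl y (fun z => E.B x z = 0)
  have h5 := E.card_compl y (fun z => E.B x z = 0 ∧ E.Q z = 0)
  have h6 := E.card_ker x hx hQ
  rw [← hq] at h2 h3 h6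
  rw [hV] at h6
  have h7 : (cnt fun z : V => E.B x z = 0) = q ^ 5 := by
    apply mul_right_cancel₀ hq0; rw [h6]; ring
  have h8 : (cnt fun z : V => E.B x z = 0 ∧ E.B y z = 0) = q ^ 4 := by
    apply mul_right_cancel₀ hq0; rw [h3, h7]; ring
  have h9 : (cnt fun z : V => (E.B x z = 0 ∧ E.B y z ≠ 0) ∧ E.Q z = 0) = q ^ 4 - q ^ 3 := by
    apply mul_right_cancel₀ hq0; rw [h2]; linarith
  have h10 : (cnt fun z : V => (E.B x z = 0 ∧ E.Q z = 0) ∧ E.B y z ≠ 0) = q ^ 4 - q ^ 3 := by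
    rw [← h9]; apply cnt_congr; intro z; tauto
  linarith

end EllSpace

set_option maxHeartbeats 1000000 in
/-- existence of the elliptic space -/
lemma exists_ellSpace (F : Type) [Field F] [Fintype F] :
    ∃ E : EllSpace F ((F × F) × (F × F) × (F × F)),
    (cnt fun z => E.Q z = 0) =
      (Fintype.card F : ℝ) ^ 5 - (Fintype.card F : ℝ) ^ 3 + (Fintype.card F : ℝ) ^ 2 := by
  obtain ⟨c, hc⟩ : ∃ c : F, ∀ t : F, t ^ 2 - t ≠ c := by
    by_contra! h
    have hs : Function.Surjective (fun t : F => t ^ 2 - t) := h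
    have := Finite.injective_iff_surjective.mpr hs
    exact one_ne_zero (this (show (fun t : F => t ^ 2 - t) 1 = (fun t : F => t ^ 2 - t) 0 by simp))
  have aniso : ∀ u v : F, u ^ 2 - u * v - c * v ^ 2 = 0 → u = 0 ∧ v = 0 := by
    intro u v h
    by_cases hv : v = 0
    · subst hv; simpa using h
    · exfalso; apply hc (u / v); field_simp; linear_combination h
  let E : EllSpace F ((F × F) × (F × F) × (F × F)) :=
    { B := LinearMap.mk₂ F (fun x y => x.1.1 * y.2.1.1 + y.1.1 * x.2.1.1 + x.1.2 * y.2.1.2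
          + y.1.2 * x.2.1.2 + 2 * x.2.2.1 * y.2.2.1 - x.2.2.1 * y.2.2.2 - y.2.2.1 * x.2.2.2
          - 2 * c * x.2.2.2 * y.2.2.2)
          (by intros; simp; ring) (by intros; simp; ring)
          (by intros; simp; ring) (by intros; simp; ring)
      Q := fun x => x.1.1 * x.2.1.1 + x.1.2 * x.2.1.2
          + (x.2.2.1 ^ 2 - x.2.2.1 * x.2.2.2 - c * x.2.2.2 ^ 2)
      symm := by intros; simp; ring
      polar := by intros; simp; ring
      nondeg := by
        rintro ⟨⟨a, b⟩, ⟨x, y⟩, ⟨u, v⟩⟩ h0 hQ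
        by_contra! hcon
        have h1 := hcon ((1, 0), (0, 0), (0, 0))
        have h2 := hcon ((0, 1), (0, 0), (0, 0))
        have h3 := hcon ((0, 0), (1, 0), (0, 0))
        have h4 := hcon ((0, 0), (0, 1), (0, 0))
        simp at h1 h2 h3 h4
        subst h1 h2 h3 h4
        obtain ⟨rfl, rfl⟩ := aniso u v (by simpa using hQ)
        exact h0 rfl }
  refine ⟨E, ?_⟩
  set q : ℝ := (Fintype.card F : ℝ) with hq
  have hq0 : q ≠ 0 := by simp [hq]
  have hQ : ∀ z, E.Q z = z.1.1 * z.2.1.1 + z.1.2 * z.2.1.2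
          + (z.2.2.1 ^ 2 - z.2.2.1 * z.2.2.2 - c * z.2.2.2 ^ 2) := fun z => rfl
  have e1 := bp_shift (F := F) (V := (F × F) × (F × F) × (F × F)) ((0, 0), (1, 0), (0, 0))
    (fun z => z.1.1 ≠ 0) E.Q (fun z => z.1.1) (by simp) (by intros; simp [hQ]; ring) (by simp)
    (by simp)
  have e2 := bp_shift (F := F) (V := (F × F) × (F × F) × (F × F)) ((0, 0), (0, 1), (0, 0))
    (fun z => z.1.1 = 0 ∧ z.1.2 ≠ 0) E.Q (fun z => z.1.2) (by simp)
    (by intros; simp [hQ]; ring) (by simp)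
    (by simp)
  have f1 := bp_shift (F := F) (V := (F × F) × (F × F) × (F × F)) ((1, 0), (0, 0), (0, 0))
    (fun z => True) (fun z => z.1.1) (fun z => 1) (by simp) (by intros; simp) (by simp)
    (by simp)
  have f2 := bp_shift (F := F) (V := (F × F) × (F × F) × (F × F)) ((0, 1), (0, 0), (0, 0))
    (fun z => z.1.1 = 0) (fun z => z.1.2) (fun z => 1) (by simp) (by intros; simp) (by simp)
    (by simp)
  have hsplit := cnt_split (V := (F × F) × (F × F) × (F × F))
  have hV : (Fintype.card ((F × F) × (F × F) × (F × F)) : ℝ) = q ^ 6 := by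
    simp [hq]; ring
  have g1 := hsplit (fun _ => True) (fun z => z.1.1 = 0)
  have g2 := hsplit (fun z => z.1.1 = 0) (fun z => z.1.2 = 0)
  have g3 := hsplit (fun z => E.Q z = 0) (fun z => z.1.1 = 0)
  have g4 := hsplit (fun z => z.1.1 = 0 ∧ E.Q z = 0) (fun z => z.1.2 = 0)
  have last : (cnt fun z : (F × F) × (F × F) × (F × F) => z.1.2 = 0 ∧ z.1.1 = 0 ∧ E.Q z = 0)
      = q ^ 2 := by
    classical
    have : ({z : (F × F) × (F × F) × (F × F) | z.1.2 = 0 ∧ z.1.1 = 0 ∧ E.Q z = 0} : Finset _)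
      = (univ : Finset (F × F)).image (fun w => ((0, 0), w, (0, 0))) := by
      ext ⟨⟨a, b⟩, w, ⟨u, v⟩⟩
      simp only [mem_filter, mem_univ, true_and, mem_image, hQ]
      constructor
      · rintro ⟨rfl, rfl, h⟩
        obtain ⟨rfl, rfl⟩ := aniso u v (by simpa using h)
        exact ⟨w, rfl⟩
      · rintro ⟨w', h⟩
        simp only [Prod.mk.injEq] at h
        obtain ⟨⟨rfl, rfl⟩, rfl, rfl, rfl⟩ := h
        simp
    rw [cnt_card, this, Finset.card_image_of_injective _ (by intro a b h; simpa using h)]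
    simp [hq]; ring
  have s1 : (cnt fun z : (F × F) × (F × F) × (F × F) => ¬ z.1.2 = 0 ∧ z.1.1 = 0)
      = (cnt fun z : (F × F) × (F × F) × (F × F) => z.1.1 = 0 ∧ z.1.2 ≠ 0) := by
    apply cnt_congr; intro z; tauto
  have s2 : (cnt fun z : (F × F) × (F × F) × (F × F) => ¬ z.1.2 = 0 ∧ z.1.1 = 0 ∧ E.Q z = 0)
      = (cnt fun z : (F × F) × (F × F) × (F × F) => (z.1.1 = 0 ∧ z.1.2 ≠ 0) ∧ E.Q z = 0) := by
    apply cnt_congr; intro z; tauto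
  have s3 : (cnt fun z : (F × F) × (F × F) × (F × F) => z.1.2 = 0 ∧ z.1.1 = 0)
      = (cnt fun z : (F × F) × (F × F) × (F × F) => z.1.1 = 0 ∧ z.1.2 = 0) := by
    apply cnt_congr; intro z; tauto
  simp only [true_and, and_true, cnt_true, hV] at f1 g1
  rw [s1, s3] at g2
  rw [last, s2] at g4
  simp only [← ne_eq] at g1 g3
  rw [g3, g4]
  have k1 : (cnt fun z : (F × F) × (F × F) × (F × F) => z.1.1 = 0) = q ^ 5 := by
    apply mul_right_cancel₀ hq0; rw [f1]; ring
  have k2 : (cnt fun z : (F × F) × (F × F) × (F × F) => z.1.1 = 0 ∧ z.1.2 = 0) = q ^ 4 := by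
    apply mul_right_cancel₀ hq0; rw [f2, k1]; ring
  have k3 : (cnt fun z : (F × F) × (F × F) × (F × F) => z.1.1 ≠ 0 ∧ E.Q z = 0) = q ^ 5 - q ^ 4 := by
    apply mul_right_cancel₀ hq0; rw [e1]; linarith
  have k4 : (cnt fun z : (F × F) × (F × F) × (F × F) => (z.1.1 = 0 ∧ z.1.2 ≠ 0) ∧ E.Q z = 0)
      = q ^ 4 - q ^ 3 := by
    apply mul_right_cancel₀ hq0; rw [e2]; linarith
  linarith

namespace EllSpace

variable {F V : Type*} [Field F] [Fintype F] [AddCommGroup V] [Module F V] [Fintype V]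
  (E : EllSpace F V)

/-- nonzero singular vectors -/
abbrev S : Type _ := {z : V // z ≠ 0 ∧ E.Q z = 0}

noncomputable instance : Fintype E.S := Fintype.ofFinite _

/-- proportionality -/
def prop (x y : E.S) : Prop := ∃ t : F, (y : V) = t • (x : V)

lemma prop_refl (x : E.S) : E.prop x x := ⟨1, by simp⟩

lemma prop_symm {x y : E.S} (h : E.prop x y) : E.prop y x := by
  obtain ⟨t, ht⟩ := h
  have : t ≠ 0 := by rintro rfl; exact y.2.1 (by simpa using ht)
  exact ⟨t⁻¹, by rw [ht, smul_smul, inv_mul_cancel₀ this, one_smul]⟩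

lemma prop_comm {x y : E.S} : E.prop x y ↔ E.prop y x := ⟨E.prop_symm, E.prop_symm⟩

lemma prop_trans {x y z : E.S} (h : E.prop x y) (h' : E.prop y z) : E.prop x z := by
  obtain ⟨t, ht⟩ := h
  obtain ⟨s, hs⟩ := h'
  exact ⟨s * t, by rw [hs, ht, smul_smul]⟩

lemma prop_orth {x y : E.S} (h : E.prop x y) (v : V) : E.B y v = 0 ↔ E.B x v = 0 := by
  obtain ⟨t, ht⟩ := h
  have : t ≠ 0 := by rintro rfl; exact y.2.1 (by simpa using ht)
  rw [ht]; simp [this]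

lemma sum_S (p : V → Prop) (h0 : p 0) :
    ∑ z : E.S, (ind (p z)) = (cnt fun z : V => p z ∧ E.Q z = 0) - 1 := by
  classical
  have hQ0 := E.Q_zero
  have h : #{z : E.S | p z} = #(({z : V | p z ∧ E.Q z = 0} : Finset V).erase 0) := by
    refine Finset.card_bij (fun z _ => (z : V)) ?_ ?_ ?_
    · intro z hz
      simp only [mem_filter, mem_univ, true_and, mem_erase] at hz ⊢
      exact ⟨z.2.1, hz, z.2.2⟩
    · intro z _ w _ h
      exact Subtype.ext h
    · intro z hz
      simp only [mem_filter, mem_univ, true_and, mem_erase] at hz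
      exact ⟨⟨z, hz.1, hz.2.2⟩, by simpa using hz.2.1, rfl⟩
  have hmem : (0 : V) ∈ ({z : V | p z ∧ E.Q z = 0} : Finset V) := by simp [h0, hQ0]
  rw [sum_ind, cnt_card, cnt_card, h, card_erase_of_mem hmem, Nat.cast_pred (card_pos.2 ⟨0, hmem⟩)]

lemma sum_prop (x : E.S) :
    ∑ z : E.S, (ind (E.prop x z)) = Fintype.card F - 1 := by
  classical
  have hQ0 := E.Q_zero
  have h : (#{z : E.S | E.prop x z}) = #((univ : Finset F).erase 0) := by
    symm
    refine Finset.card_bij (fun t ht => ⟨t • (x : V), smul_ne_zero (by simpa using ht) x.2.1,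
      E.Q_zero_smul t x x.2.2 hQ0⟩) ?_ ?_ ?_
    · intro t ht
      simp only [mem_filter, mem_univ, true_and]
      exact ⟨t, rfl⟩
    · intro t ht s hs h
      exact smul_left_injective F x.2.1 (Subtype.ext_iff.mp h)
    · intro z hz
      simp only [mem_filter, mem_univ, true_and] at hz
      obtain ⟨t, ht⟩ := hz
      refine ⟨t, ?_, Subtype.ext ht.symm⟩
      have : t ≠ 0 := by rintro rfl; exact z.2.1 (by simpa using ht)
      simpa using this
  rw [sum_ind, cnt_card, h, card_erase_of_mem (mem_univ _), card_univ,
    Nat.cast_pred Fintype.card_pos]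

lemma exists_proj (q : ℝ) (hq : q = Fintype.card F)
    (hq1 : 1 < q) (hV : (Fintype.card V : ℝ) = q ^ 6)
    (hS : (cnt fun z : V => E.Q z = 0) = q ^ 5 - q ^ 3 + q ^ 2) :
    (Fintype.card E.S : ℝ) = (q ^ 3 + 1) * (q ^ 2 - 1) ∧
    ∃ G : Matrix E.S E.S ℝ, G.transpose = G ∧ G * G = G ∧ (∀ x, ∑ y, G x y = 0) ∧
      G.trace = q ^ 3 - q ^ 2 + q ∧ ∀ x y, G x y = (1 / ((q - 1) * q * (q + 1))) *
        (q * (ind (E.prop x y)) - (ind (E.B x y = 0)) + 1 / (q + 1)) := by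
  have hq0 : q ≠ 0 := by linarith
  have hq2 : q + 1 ≠ 0 := by linarith
  have hq3 : q - 1 ≠ 0 := by linarith
  let P : Matrix E.S E.S ℝ := Matrix.of fun x y => ind (E.prop x y)
  let M : Matrix E.S E.S ℝ := Matrix.of fun x y => ind (E.B x y = 0)
  let J : Matrix E.S E.S ℝ := Matrix.of fun x y => 1
  have hN : (Fintype.card E.S : ℝ) = (q ^ 3 + 1) * (q ^ 2 - 1) := by
    have := E.sum_S (fun _ => True) trivial
    simp only [ind_pos, true_and, hS] at this
    simp only [sum_const, card_univ, nsmul_eq_mul, mul_one] at this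
    rw [this]; ring
  have hPs : P.transpose = P := by
    ext x y; simp only [P, Matrix.transpose_apply, Matrix.of_apply, E.prop_comm]
  have hMs : M.transpose = M := by
    ext x y; simp only [M, Matrix.transpose_apply, Matrix.of_apply, E.symm]
  have hJs : J.transpose = J := by
    ext x y; simp only [J, Matrix.transpose_apply, Matrix.of_apply]
  have hPP : P * P = (q - 1) • P := by
    ext x y
    simp only [P, Matrix.mul_apply, Matrix.of_apply, Matrix.smul_apply, smul_eq_mul]
    rw [hq, ← E.sum_prop x, Finset.sum_mul]
    refine Finset.sum_congr rfl fun z _ => ?_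
    by_cases h : E.prop x z
    · have : E.prop z y ↔ E.prop x y := ⟨E.prop_trans h, E.prop_trans (E.prop_symm h)⟩
      simp [this]
    · simp [h, ind]
  have hPM : P * M = (q - 1) • M := by
    ext x y
    simp only [P, M, Matrix.mul_apply, Matrix.of_apply, Matrix.smul_apply, smul_eq_mul]
    rw [hq, ← E.sum_prop x, Finset.sum_mul]
    refine Finset.sum_congr rfl fun z _ => ?_
    by_cases h : E.prop x z
    · simp [E.prop_orth h]
    · simp [h, ind]
  have hMP : M * P = (q - 1) • M := by
    have := congrArg Matrix.transpose hPM
    rwa [Matrix.transpose_mul, hPs, hMs, Matrix.transpose_smul, hMs] at this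
  have hPJ : P * J = (q - 1) • J := by
    ext x y
    simp only [P, J, Matrix.mul_apply, Matrix.of_apply, Matrix.smul_apply, smul_eq_mul, mul_one]
    rw [hq, ← E.sum_prop x]
  have hJP : J * P = (q - 1) • J := by
    have := congrArg Matrix.transpose hPJ
    rwa [Matrix.transpose_mul, hPs, hJs, Matrix.transpose_smul, hJs] at this
  have hM1 : ∀ x : E.S, ∑ z : E.S, (ind (E.B x z = 0))
      = q ^ 4 - q ^ 3 + q ^ 2 - 1 := by
    intro x
    rw [E.sum_S (fun z => E.B x z = 0) (by simp), E.card_L1 x x.2.1 x.2.2 q hq hq0 hV hS]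
  have hMJ : M * J = (q ^ 4 - q ^ 3 + q ^ 2 - 1) • J := by
    ext x y
    simp only [M, J, Matrix.mul_apply, Matrix.of_apply, Matrix.smul_apply, smul_eq_mul, mul_one]
    exact hM1 x
  have hJM : J * M = (q ^ 4 - q ^ 3 + q ^ 2 - 1) • J := by
    have := congrArg Matrix.transpose hMJ
    rwa [Matrix.transpose_mul, hMs, hJs, Matrix.transpose_smul, hJs] at this
  have hJJ : J * J = ((q ^ 3 + 1) * (q ^ 2 - 1)) • J := by
    ext x y
    simp only [J, Matrix.mul_apply, Matrix.of_apply, Matrix.smul_apply, smul_eq_mul, mul_one,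
      sum_const, card_univ, nsmul_eq_mul, hN]
  have hMM : M * M = (q ^ 3 - q ^ 2 + q - 1) • J + (2 * q ^ 2 - q ^ 3 - q) • M
      + (q ^ 4 - q ^ 3) • P := by
    ext x y
    have h1 : (M * M) x y = ∑ z : E.S,
        ind ((fun v => E.B x v = 0 ∧ E.B y v = 0) (z : V)) := by
      simp only [M, Matrix.mul_apply, Matrix.of_apply]
      refine Finset.sum_congr rfl fun z _ => ?_
      rw [E.symm z y]
      by_cases h : E.B x z = 0 <;> by_cases h' : E.B y z = 0 <;> simp [h, h', ind]
    rw [h1, E.sum_S (fun v => E.B x v = 0 ∧ E.B y v = 0) (by simp)]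
    simp only [Matrix.add_apply, Matrix.smul_apply, smul_eq_mul, P, M, J, Matrix.of_apply, mul_one]
    have h2 : (cnt fun z : V => (E.B x z = 0 ∧ E.B y z = 0) ∧ E.Q z = 0)
        = (cnt fun z : V => (E.B x z = 0 ∧ E.Q z = 0) ∧ E.B y z = 0) := by
      apply cnt_congr; intro z; tauto
    by_cases hp : E.prop x y
    · have h3 : (cnt fun z : V => (E.B x z = 0 ∧ E.B y z = 0) ∧ E.Q z = 0)
        = (cnt fun z : V => E.B x z = 0 ∧ E.Q z = 0) := by
        apply cnt_congr; intro z; simp [E.prop_orth hp]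
      have h4 : E.B x y = 0 := by
        rw [E.symm, E.prop_orth hp]; exact E.B_self x x.2.2
      rw [h3, E.card_L1 x x.2.1 x.2.2 q hq hq0 hV hS, ind_pos hp, ind_pos h4]
      ring
    · rw [h2, ind_neg hp]
      by_cases ho : E.B x y = 0
      · rw [E.card_L3 x y x.2.1 x.2.2 y.2.2 ho (fun t h => hp ⟨t, h⟩) q hq hq0 hV hS, ind_pos ho]
        ring
      · rw [E.card_L2 x y x.2.1 x.2.2 ho q hq hq0 hV hS, ind_neg ho]
        ring
  refine ⟨hN, (1 / ((q - 1) * q * (q + 1))) • (q • P - M + (1 / (q + 1)) • J), ?_, ?_, ?_, ?_, ?_⟩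
  · simp only [Matrix.transpose_smul, Matrix.transpose_add, Matrix.transpose_sub, hPs, hMs, hJs]
  · simp only [Matrix.smul_mul, Matrix.mul_smul, mul_add, add_mul, mul_sub, sub_mul, hPP, hPM, hMP,
      hPJ, hJP, hMJ, hJM, hJJ, hMM]
    ext x y
    simp only [Matrix.add_apply, Matrix.sub_apply, Matrix.smul_apply, smul_eq_mul]
    generalize P x y = p
    generalize M x y = m
    generalize J x y = j
    field_simp
    ring
  · intro x
    simp only [Matrix.add_apply, Matrix.sub_apply, Matrix.smul_apply, smul_eq_mul, P, M, J,
      Matrix.of_apply, ← Finset.mul_sum, Finset.sum_add_distrib, Finset.sum_sub_distrib, hM1,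
      E.sum_prop, ← hq]
    simp only [sum_const, card_univ, nsmul_eq_mul, hN]
    field_simp
    ring
  · have : ∀ x : E.S, E.B x x = 0 := fun x => E.B_self x x.2.2
    simp only [Matrix.trace, Matrix.diag, Matrix.add_apply, Matrix.sub_apply, Matrix.smul_apply,
      smul_eq_mul, P, M, J, Matrix.of_apply, E.prop_refl, this, ind_pos]
    simp only [sum_const, card_univ, nsmul_eq_mul, hN]
    field_simp
    ring
  · intro x y
    simp only [Matrix.add_apply, Matrix.sub_apply, Matrix.smul_apply, smul_eq_mul, P, M, J,
      Matrix.of_apply, mul_one]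

/-- pairwise orthogonal sets of singular vectors are small -/
lemma card_orth (q : ℝ) (hq : q = Fintype.card F)
    (hq1 : 1 < q) (hV : (Fintype.card V : ℝ) = q ^ 6)
    (hS : (cnt fun z : V => E.Q z = 0) = q ^ 5 - q ^ 3 + q ^ 2)
    (C : Finset E.S) (hC : ∀ x ∈ C, ∀ y ∈ C, E.B x y = 0) : (#C : ℝ) ≤ q ^ 2 - 1 := by
  classical
  have hq0 : q ≠ 0 := by linarith
  rcases C.eq_empty_or_nonempty with rfl | ⟨x, hx⟩
  · rw [card_empty]; push_cast; nlinarith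
  by_cases h : ∀ y ∈ C, E.prop x y
  · have h1 : #C ≤ #{z : E.S | E.prop x z} := card_le_card fun y hy => by simpa using h y hy
    have h2 := E.sum_prop x
    rw [sum_ind, ← hq] at h2
    have h3 : (#C : ℝ) ≤ (cnt fun z : E.S => E.prop x z) := by rw [cnt_card]; exact_mod_cast h1
    nlinarith
  · push Not at h
    obtain ⟨y, hy, hp⟩ := h
    have h1 : #C ≤ #{z : E.S | (fun v => E.B x v = 0 ∧ E.B y v = 0) (z : V)} :=
      card_le_card fun z hz => by simpa using ⟨hC x hx z hz, hC y hy z hz⟩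
    have h2 := E.sum_S (fun v => E.B x v = 0 ∧ E.B y v = 0) (by simp)
    have h4 : (cnt fun z : V => (E.B x z = 0 ∧ E.B y z = 0) ∧ E.Q z = 0)
        = (cnt fun z : V => (E.B x z = 0 ∧ E.Q z = 0) ∧ E.B y z = 0) := by
      apply cnt_congr; intro z; tauto
    rw [sum_ind, cnt_card, h4, E.card_L3 x y x.2.1 x.2.2 y.2.2 (hC x hx y hy)
      (fun t h => hp ⟨t, h⟩) q hq hq0 hV hS] at h2
    rw [← h2]
    exact_mod_cast h1

end EllSpace

lemma bp_transfer {ι : Type*} [Fintype ι] {d : ℕ} (c : ι → EuclideanSpace ℝ (Fin d)) (r : ι → ℝ)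
    (hr : ∀ i, 0 < r i) (hp : ∀ i j, i ≠ j → r i + r j ≤ dist (c i) (c j)) (k : ℕ)
    (hcol : ¬ ∃ col : ι → Fin (k + 1), ∀ i j, i ≠ j → dist (c i) (c j) = r i + r j →
      col i ≠ col j) :
    ∃ (n : ℕ) (c : Fin n → EuclideanSpace ℝ (Fin d)) (r : Fin n → ℝ),
      (∀ i, 0 < r i) ∧
      (∀ i j, i ≠ j → r i + r j ≤ dist (c i) (c j)) ∧
      (tangencyGraph c r).chromaticNumber = ((k + 2 : ℕ) : ℕ∞) := by
  classical
  let P : Finset ι → Prop := fun s => ¬ ∃ col : ι → Fin (k + 1), ∀ i ∈ s, ∀ j ∈ s, i ≠ j →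
    dist (c i) (c j) = r i + r j → col i ≠ col j
  have hex : ∃ s, P s := ⟨univ, by simpa [P] using hcol⟩
  obtain ⟨s, hs, hmin⟩ := WellFounded.has_min (wellFounded_lt (α := Finset ι)) {s | P s} hex
  have hne : s.Nonempty := by
    by_contra h
    rw [not_nonempty_iff_eq_empty] at h
    exact hs ⟨fun _ => 0, by simp [h]⟩
  obtain ⟨v, hv⟩ := hne
  have he : ¬ P (s.erase v) := fun h => hmin _ h (erase_ssubset hv)
  obtain ⟨col, hc⟩ := not_not.mp he
  let e := s.equivFin.symm
  refine ⟨s.card, fun i => c (e i), fun i => r (e i), fun i => hr _, ?_, ?_⟩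
  · intro i j hij
    exact hp _ _ (fun h => hij (e.injective (Subtype.ext h)))
  · have h1 : (tangencyGraph (fun i => c (e i)) (fun i => r (e i))).Colorable (k + 2) := by
      refine ⟨SimpleGraph.Coloring.mk
        (fun i => if (e i : ι) = v then Fin.last (k + 1) else (col (e i)).castSucc) ?_⟩
      rintro i j ⟨hij, hd⟩
      have hne : (e i : ι) ≠ e j := fun h => hij (e.injective (Subtype.ext h))
      show (if (e i : ι) = v then Fin.last (k + 1) else (col (e i)).castSucc) ≠
        (if (e j : ι) = v then Fin.last (k + 1) else (col (e j)).castSucc)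
      split_ifs with h1 h2 h2
      · exact absurd (h1.trans h2.symm) hne
      · exact (Fin.castSucc_lt_last _).ne'
      · exact (Fin.castSucc_lt_last _).ne
      · intro h
        exact hc _ (mem_erase.2 ⟨h1, (e i).2⟩) _ (mem_erase.2 ⟨h2, (e j).2⟩) hne hd
          (Fin.castSucc_injective _ h)
    have h2 : ¬ (tangencyGraph (fun i => c (e i)) (fun i => r (e i))).Colorable (k + 1) := by
      rintro ⟨C⟩
      apply hs
      refine ⟨fun i => if h : i ∈ s then C (e.symm ⟨i, h⟩) else 0, ?_⟩
      intro i hi j hj hij hd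
      simp only [hi, hj, dite_true]
      apply C.valid
      refine ⟨fun h => hij (by simpa using h), by simpa using hd⟩
    apply le_antisymm h1.chromaticNumber_le
    by_contra h
    apply h2
    rw [← SimpleGraph.chromaticNumber_le_iff_colorable]
    rw [not_le] at h
    exact Order.le_of_lt_add_one (by exact_mod_cast h)

open Matrix in
lemma bp_embed {ι : Type*} [Fintype ι] [DecidableEq ι] [Nonempty ι] (E : Matrix ι ι ℝ) (d : ℕ)
    (hsymm : Eᵀ = E) (hid : E * E = E) (hsum : ∀ x, ∑ y, E x y = 0) (htr : E.trace = d) :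
    ∃ (f : ι → EuclideanSpace ℝ (Fin (d + 1))) (u : EuclideanSpace ℝ (Fin (d + 1))),
      (∀ x y, inner ℝ (f x) (f y) = E x y) ∧ (∀ x, inner ℝ (f x) u = 0) ∧ ‖u‖ = 1 := by
  set m : ℝ := (Fintype.card ι : ℝ) with hm
  have hm0 : m ≠ 0 := by simp [hm]
  let J : Matrix ι ι ℝ := Matrix.of fun _ _ => m⁻¹
  have hs : ∀ x y, E x y = E y x := fun x y => by
    conv_lhs => rw [← hsymm]
    rfl
  have hEJ : E * J = 0 := by
    ext x y; simp [J, Matrix.mul_apply, ← Finset.sum_mul, hsum]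
  have hJE : J * E = 0 := by
    ext x y; simp only [J, Matrix.mul_apply, Matrix.of_apply, ← Finset.mul_sum]
    simp_rw [fun i => hs i y, hsum]; simp
  have hJJ : J * J = J := by
    ext x y; simp [J, Matrix.mul_apply, ← hm, hm0]
  have hI : (E + J) * (E + J) = E + J := by
    rw [mul_add, add_mul, add_mul, hid, hEJ, hJE, hJJ]; simp
  let T : EuclideanSpace ℝ ι →ₗ[ℝ] EuclideanSpace ℝ ι := Matrix.toLpLin 2 2 (E + J)
  have hT : IsIdempotentElem T := by
    unfold IsIdempotentElem
    show T ∘ₗ T = T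
    simp only [T]
    rw [← Matrix.toLpLin_mul, hI]
  have htrT : LinearMap.trace ℝ _ T = (E + J).trace := by
    simp only [T]
    rw [Matrix.toLpLin_eq_toLin, Matrix.trace_toLin_eq]
  have hrank : Module.finrank ℝ (LinearMap.range T) = d + 1 := by
    have h1 := (LinearMap.IsIdempotentElem.isProj_range T hT).trace
    have h2 : J.trace = 1 := by simp [Matrix.trace, J, ← hm, hm0]
    rw [htrT, Matrix.trace_add, htr, h2] at h1
    exact_mod_cast h1.symm
  let φ := ((stdOrthonormalBasis ℝ (LinearMap.range T)).reindex (finCongr hrank)).repr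
  have hTv : ∀ v : EuclideanSpace ℝ ι, ∀ i, T v i = ∑ j, (E + J) i j * v j := by
    intro v i; rfl
  let f0 : ι → LinearMap.range T := fun x => ⟨WithLp.toLp 2 (fun z => E z x), by
    refine ⟨WithLp.toLp 2 (fun z => E z x), ?_⟩
    ext i
    rw [hTv]
    show ((E + J) * E) i x = E i x
    rw [add_mul, hid, hJE, add_zero]⟩
  let u0 : LinearMap.range T := ⟨WithLp.toLp 2 (fun z => (√m)⁻¹), by
    refine ⟨WithLp.toLp 2 (fun z => (√m)⁻¹), ?_⟩
    ext i
    rw [hTv]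
    simp only [← Finset.sum_mul, Matrix.add_apply, Finset.sum_add_distrib, hsum]
    simp [J, ← hm, hm0]⟩
  refine ⟨fun x => φ (f0 x), φ u0, ?_, ?_, ?_⟩
  · intro x y
    rw [LinearIsometryEquiv.inner_map_map]
    simp only [f0, Submodule.coe_inner, PiLp.inner_apply]
    conv_rhs => rw [← hid, Matrix.mul_apply]
    apply Finset.sum_congr rfl
    intro z _
    simp [hs z x, mul_comm]
  · intro x
    rw [LinearIsometryEquiv.inner_map_map]
    simp only [f0, u0, Submodule.coe_inner, PiLp.inner_apply]
    simp [← Finset.mul_sum, hs _ x, hsum]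
  · rw [LinearIsometryEquiv.norm_map]
    have : ‖u0‖ ^ 2 = 1 := by
      rw [← real_inner_self_eq_norm_sq]
      simp only [u0, Submodule.coe_inner, PiLp.inner_apply]
      have : (0 : ℝ) ≤ m := by simp [hm]
      simp [← hm, Real.sq_sqrt this, hm0]
    nlinarith [norm_nonneg u0]

/-- geometric realisation: balls on a sphere together with two apex balls -/
lemma bp_final {ι : Type*} [Fintype ι] {d : ℕ} (f : ι → EuclideanSpace ℝ (Fin d))
    (u : EuclideanSpace ℝ (Fin d)) (k : ℕ) (a ρ : ℝ) (hρ : 0 < ρ) (ha : ρ ^ 2 < a)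
    (hn : ∀ x, ‖f x‖ ^ 2 = a) (hu : ∀ x, inner ℝ (f x) u = 0) (hu1 : ‖u‖ = 1)
    (hd : ∀ x y, f x ≠ f y → 2 * ρ ≤ dist (f x) (f y))
    (hcol : ∀ (s : Finset (Fin (k + 3))), s.card = k + 1 → ∀ col : ι → Fin (k + 3),
      (∀ x, col x ∈ s) →
      ∃ x y, col x = col y ∧ dist (f x) (f y) = 2 * ρ) :
    ∃ (n : ℕ) (c : Fin n → EuclideanSpace ℝ (Fin d)) (r : Fin n → ℝ),
      (∀ i, 0 < r i) ∧
      (∀ i j, i ≠ j → r i + r j ≤ dist (c i) (c j)) ∧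
      (tangencyGraph c r).chromaticNumber = ((k + 4 : ℕ) : ℕ∞) := by
  classical
  obtain ⟨h, hh⟩ : ∃ h, h = (a - ρ ^ 2) / (2 * ρ) := ⟨_, rfl⟩
  have hpos : 0 < h := by rw [hh]; apply div_pos <;> linarith
  have hah : a + h ^ 2 = (ρ + h) ^ 2 := by
    rw [hh]; field_simp; ring
  let T : Type _ := {v // v ∈ Finset.univ.image f}
  have : Fintype T := inferInstanceAs (Fintype {v // v ∈ Finset.univ.image f})
  let sg : Bool → ℝ := fun b => if b then h else -h
  have hsg : ∀ b, sg b ^ 2 = h ^ 2 := by intro b; cases b <;> simp [sg]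
  let c : T ⊕ Bool → EuclideanSpace ℝ (Fin d) := Sum.elim (fun v => v.1) (fun b => sg b • u)
  let r : T ⊕ Bool → ℝ := Sum.elim (fun _ => ρ) (fun _ => h)
  have hfb : ∀ x b, dist (f x) (sg b • u) = ρ + h := by
    intro x b
    rw [dist_eq_norm]
    have : ‖f x - sg b • u‖ ^ 2 = (ρ + h) ^ 2 := by
      rw [norm_sub_sq_real, inner_smul_right, hu, norm_smul, hu1, hn, mul_one, Real.norm_eq_abs,
        sq_abs, hsg, ← hah]
      ring
    exact (sq_eq_sq₀ (norm_nonneg _) (by linarith)).1 this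
  have hbb : ∀ b b', b ≠ b' → dist (sg b • u) (sg b' • u) = h + h := by
    intro b b' hb
    rw [dist_eq_norm, ← sub_smul, norm_smul, hu1, mul_one, Real.norm_eq_abs]
    cases b <;> cases b' <;> simp [sg] at hb ⊢
    · rw [abs_of_nonpos] <;> linarith
    · exact hpos.le
  refine bp_transfer c r ?_ ?_ (k + 2) ?_
  · rintro (i | i) <;> simp [r, hρ, hpos]
  · rintro (⟨v, hv⟩ | b) (⟨w, hw⟩ | b') hij
    · obtain ⟨x, -, rfl⟩ := Finset.mem_image.1 hv
      obtain ⟨y, -, rfl⟩ := Finset.mem_image.1 hw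
      have := hd x y (fun he => hij (by simp [he]))
      simp only [c, r, Sum.elim_inl]
      linarith
    · obtain ⟨x, -, rfl⟩ := Finset.mem_image.1 hv
      simp only [c, r, Sum.elim_inl, Sum.elim_inr]
      exact (hfb x b').ge
    · obtain ⟨x, -, rfl⟩ := Finset.mem_image.1 hw
      simp only [c, r, Sum.elim_inl, Sum.elim_inr]
      rw [dist_comm, add_comm]
      exact (hfb x b).ge
    · simp only [c, r, Sum.elim_inr]
      exact (hbb b b' (fun he => hij (by rw [he]))).ge
  · rintro ⟨col, hc⟩
    have htf : col (Sum.inr true) ≠ col (Sum.inr false) :=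
      hc _ _ (by simp) (by simpa [c, r] using hbb true false (by simp))
    let j : ι → T := fun x => ⟨f x, Finset.mem_image_of_mem f (Finset.mem_univ x)⟩
    have hx : ∀ x b, col (Sum.inl (j x)) ≠ col (Sum.inr b) := fun x b =>
      hc _ _ (by simp) (by simpa [c, r, j] using hfb x b)
    obtain ⟨x, y, hxy, hD⟩ := hcol
      ((Finset.univ.erase (col (Sum.inr true))).erase (col (Sum.inr false)))
      (by
        rw [Finset.card_erase_of_mem (by simpa using htf.symm),
          Finset.card_erase_of_mem (Finset.mem_univ _)]
        simp)
      (fun x => col (Sum.inl (j x))) (fun x => by simp [hx])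
    refine hc (Sum.inl (j x)) (Sum.inl (j y)) ?_ ?_ hxy
    · intro he
      have : f x = f y := by
        exact congrArg Subtype.val (Sum.inl_injective he)
      rw [this, dist_self] at hD
      linarith
    · simp only [c, r, j, Sum.elim_inl]
      rw [hD]; ring

/-- For every prime power `q`, there is a ball packing in dimension
`q³ - q² + q + 1` whose tangency graph has chromatic number exactly `q³ + 3`. -/
theorem exists_ball_packing_chromatic_of_primePow (q : ℕ) (hq : IsPrimePow q) :
    ∃ (n : ℕ) (c : Fin n → EuclideanSpace ℝ (Fin (q ^ 3 - q ^ 2 + q + 1))) (r : Fin n → ℝ),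
      (∀ i, 0 < r i) ∧
      (∀ i j, i ≠ j → r i + r j ≤ dist (c i) (c j)) ∧
      (tangencyGraph c r).chromaticNumber = ((q ^ 3 + 3 : ℕ) : ℕ∞) := by
  classical
  have hq2 : 1 < q := hq.one_lt
  obtain ⟨F0⟩ : Nonempty (Field (Fin q)) :=
    Fintype.nonempty_field_iff.2 (by simpa using hq)
  obtain ⟨F, iF, iFt, hF⟩ : ∃ (F : Type) (_ : Field F) (_ : Fintype F), Fintype.card F = q :=
    ⟨Fin q, F0, inferInstance, by simp⟩
  obtain ⟨E, hS⟩ := exists_ellSpace F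
  rw [hF] at hS
  have hV : (Fintype.card ((F × F) × (F × F) × (F × F)) : ℝ) = (q : ℝ) ^ 6 := by
    simp only [Fintype.card_prod, hF]; push_cast; ring
  have hQ : (q : ℝ) = Fintype.card F := by rw [hF]
  have hQ1 : (1 : ℝ) < q := by exact_mod_cast hq2
  obtain ⟨hN, G, hGs, hGi, hG0, hGt, hG⟩ := E.exists_proj q hQ hQ1 hV hS
  have hle : q ^ 2 ≤ q ^ 3 := Nat.pow_le_pow_right (by omega) (by norm_num)
  have hNpos : (0 : ℝ) < Fintype.card E.S := by
    rw [hN]; apply mul_pos <;> nlinarith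
  have : Nonempty E.S := by
    rw [← Fintype.card_pos_iff]; exact_mod_cast hNpos
  obtain ⟨f, u, hf, hu, hu1⟩ := bp_embed G (q ^ 3 - q ^ 2 + q) hGs hGi hG0
    (by rw [hGt]; push_cast [hle]; ring)
  obtain ⟨κ, hκ⟩ : ∃ κ : ℝ, κ = 1 / (((q : ℝ) - 1) * q * (q + 1)) := ⟨_, rfl⟩
  rw [← hκ] at hG
  have hκ0 : 0 < κ := by
    rw [hκ]
    have : (0 : ℝ) < q - 1 := by linarith
    positivity
  have hself : ∀ x : E.S, G x x = κ * ((q : ℝ) - 1 + 1 / (q + 1)) := by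
    intro x
    rw [hG, ind_pos (E.prop_refl x), ind_pos (E.B_self x x.2.2)]; ring
  have hdist : ∀ x y, dist (f x) (f y) ^ 2 =
      2 * (κ * ((q : ℝ) - 1 + 1 / (q + 1))) - 2 * G x y := by
    intro x y
    rw [dist_eq_norm, norm_sub_sq_real, ← real_inner_self_eq_norm_sq, ← real_inner_self_eq_norm_sq,
      hf, hf, hf, hself, hself]
    ring
  have hgam : 0 < 1 / ((q : ℝ) + 1) := by positivity
  obtain ⟨ρ, hρ⟩ : ∃ ρ : ℝ, ρ = √(κ * ((q : ℝ) - 1) / 2) := ⟨_, rfl⟩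
  have hin : 0 < κ * ((q : ℝ) - 1) / 2 := by
    have : (0 : ℝ) < q - 1 := by linarith
    positivity
  have hρ0 : 0 < ρ := by rw [hρ]; exact Real.sqrt_pos.2 hin
  have hρ2 : ρ ^ 2 = κ * ((q : ℝ) - 1) / 2 := by rw [hρ]; exact Real.sq_sqrt hin.le
  have hnon : ∀ x y : E.S, E.B x y ≠ 0 → dist (f x) (f y) = 2 * ρ := by
    intro x y hxy
    have hp : ¬ E.prop x y := by
      intro hp
      apply hxy
      rw [E.symm, E.prop_orth hp]; exact E.B_self x x.2.2
    have h1 : dist (f x) (f y) ^ 2 = (2 * ρ) ^ 2 := by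
      rw [hdist, hG, ind_neg hp, ind_neg hxy, mul_pow, hρ2]; ring
    exact (sq_eq_sq₀ dist_nonneg (by linarith)).1 h1
  obtain ⟨k, hk⟩ : ∃ k, q ^ 3 = k + 1 := by
    have : 0 < q ^ 3 := by positivity
    exact ⟨q ^ 3 - 1, by omega⟩
  have key := bp_final f u k (κ * ((q : ℝ) - 1 + 1 / (q + 1))) ρ hρ0 ?_ ?_ hu hu1 ?_ ?_
  · have h4 : q ^ 3 + 3 = k + 4 := by omega
    rw [h4]
    exact key
  · rw [hρ2]
    have := mul_pos hκ0 hgam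
    nlinarith
  · intro x
    rw [← real_inner_self_eq_norm_sq, hf, hself]
  · intro x y hxy
    by_cases ho : E.B x y = 0
    · by_cases hp : E.prop x y
      · exfalso
        apply hxy
        rw [← dist_eq_zero, ← sq_eq_zero_iff, hdist, hG, ind_pos hp, ind_pos ho]
        ring
      · have h1 : (2 * ρ) ^ 2 ≤ dist (f x) (f y) ^ 2 := by
          rw [hdist, hG, ind_neg hp, ind_pos ho, mul_pow, hρ2]
          nlinarith
        exact (sq_le_sq₀ (by linarith) dist_nonneg).1 h1
    · exact (hnon x y ho).ge
  · intro s hs col hcs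
    by_contra! hcon
    have hNn : s.card * (q ^ 2 - 1) < (Finset.univ : Finset E.S).card := by
      have h1 : 1 ≤ q ^ 2 := Nat.one_le_pow _ _ (by omega)
      have : ((s.card * (q ^ 2 - 1) : ℕ) : ℝ) < (Fintype.card E.S : ℝ) := by
        rw [hN, hs, ← hk]
        push_cast [h1]
        nlinarith
      rw [Finset.card_univ]
      exact_mod_cast this
    obtain ⟨i, -, hi⟩ := Finset.exists_lt_card_fiber_of_mul_lt_card_of_maps_to
      (fun x _ => hcs x) hNn
    have h2 := E.card_orth q hQ hQ1 hV hS {x | col x = i} (by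
      intro x hx y hy
      by_contra ho
      simp only [Finset.mem_filter, Finset.mem_univ, true_and] at hx hy
      exact hcon x y (hx.trans hy.symm) (hnon x y ho))
    have h1 : 1 ≤ q ^ 2 := Nat.one_le_pow _ _ (by omega)
    have h3 : ((q ^ 2 - 1 : ℕ) : ℝ) = (q : ℝ) ^ 2 - 1 := by push_cast [h1]; ring
    rw [← h3] at h2
    have h4 := Nat.cast_le.1 h2
    omega
end

section
/- There exists a finite set P of points in EuclideanSpace ℝ (Fin 2) with pairwise distances at least 1 whose unit-distance graph (joining two points exactly when their distance equals 1) has chromatic number 4. -/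
/-- Rational part of six times the first coordinate. -/
def ptA : Fin 17 → ℤ := ![3,-3,9,-9,6,6,-6,-6,12,6,0,-6,-12,9,3,-3,-9]
/-- Coefficient of `√6` in six times the first coordinate. -/
def ptD : Fin 17 → ℤ := ![0,0,0,0,-1,1,1,-1,0,0,0,0,0,0,0,0,0]
/-- Coefficient of `√2` in six times the second coordinate. -/
def ptB : Fin 17 → ℤ := ![0,0,6,6,3,3,3,3,6,6,6,6,6,6,6,6,6]
/-- Coefficient of `√3` in six times the second coordinate. -/
def ptC : Fin 17 → ℤ := ![0,0,0,0,1,-1,1,-1,3,3,3,3,3,6,6,6,6]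
/-- A proper colouring with four colours. -/
def ptCol : Fin 17 → Fin 4 := ![0,3,0,0,1,2,1,2,1,2,0,1,2,0,1,2,0]

/-- Rational part of 36 times the squared distance. -/
def dM (i j : Fin 17) : ℤ :=
  (ptA i - ptA j)^2 + 6 * (ptD i - ptD j)^2 + 2 * (ptB i - ptB j)^2 + 3 * (ptC i - ptC j)^2
/-- Coefficient of `√6` in 36 times the squared distance. -/
def dN (i j : Fin 17) : ℤ :=
  2 * (ptA i - ptA j) * (ptD i - ptD j) + 2 * (ptB i - ptB j) * (ptC i - ptC j)

/-- The points of the packing. -/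
noncomputable def pt (i : Fin 17) : EuclideanSpace ℝ (Fin 2) :=
  !₂[(ptA i + ptD i * (√2 * √3)) / 6, (ptB i * √2 + ptC i * √3) / 6]

theorem pt_dist (i j : Fin 17) :
    36 * dist (pt i) (pt j) ^ 2 = dM i j + dN i j * (√2 * √3) := by
  have h2 : √2 ^ 2 = (2:ℝ) := Real.sq_sqrt (by norm_num)
  have h3 : √3 ^ 2 = (3:ℝ) := Real.sq_sqrt (by norm_num)
  rw [EuclideanSpace.dist_eq, Real.sq_sqrt (by positivity)]
  simp only [Fin.sum_univ_two, pt, Real.dist_eq, sq_abs, dM, dN]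
  push_cast
  linear_combination ((ptD i - ptD j : ℝ)^2 * √3^2 + (ptB i - ptB j : ℝ)^2) * h2
    + (2 * (ptD i - ptD j : ℝ)^2 + (ptC i - ptC j : ℝ)^2) * h3

theorem s6_bounds : (2449:ℝ) < 1000 * (√2 * √3) ∧ 10000 * (√2 * √3) < (24495:ℝ) := by
  have h0 : 0 ≤ √2 * √3 := by positivity
  have h : (√2 * √3) ^ 2 = (6:ℝ) := by
    rw [mul_pow, Real.sq_sqrt (by norm_num), Real.sq_sqrt (by norm_num)]; norm_num
  constructor <;> nlinarith

theorem pt_gt (i j : Fin 17) (h1 : 0 < 1000 * (dM i j - 36) + 2449 * dN i j)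
    (h2 : 0 < 10000 * (dM i j - 36) + 24495 * dN i j) : 1 < dist (pt i) (pt j) := by
  have h := pt_dist i j
  obtain ⟨b1, b2⟩ := s6_bounds
  have h1' : (0:ℝ) < 1000 * (dM i j - 36) + 2449 * dN i j := by exact_mod_cast h1
  have h2' : (0:ℝ) < 10000 * (dM i j - 36) + 24495 * dN i j := by exact_mod_cast h2
  have hd : 0 ≤ dist (pt i) (pt j) := dist_nonneg
  have : (0:ℝ) < dM i j - 36 + dN i j * (√2 * √3) := by
    rcases le_total (0:ℝ) (dN i j) with hn | hn <;> nlinarith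
  nlinarith

theorem pt_eq (i j : Fin 17) (h1 : dM i j = 36) (h2 : dN i j = 0) :
    dist (pt i) (pt j) = 1 := by
  have h := pt_dist i j
  rw [h1, h2] at h
  have hd : 0 ≤ dist (pt i) (pt j) := dist_nonneg
  push_cast at h
  nlinarith

set_option maxRecDepth 100000 in
set_option maxHeartbeats 4000000 in
theorem pt_cases : ∀ i j : Fin 17, i ≠ j → (dM i j = 36 ∧ dN i j = 0 ∧ ptCol i ≠ ptCol j) ∨
    (0 < 1000 * (dM i j - 36) + 2449 * dN i j ∧ 0 < 10000 * (dM i j - 36) + 24495 * dN i j) := by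
  decide

theorem diamond : ∀ a b p q : Fin 3, a ≠ b → p ≠ a → p ≠ b → a ≠ q → b ≠ q → p = q := by
  decide

theorem pt_sep (i j : Fin 17) (h : i ≠ j) : 1 ≤ dist (pt i) (pt j) := by
  rcases pt_cases i j h with h | h
  · exact (pt_eq i j h.1 h.2.1).ge
  · exact (pt_gt i j h.1 h.2).le

theorem pt_inj : Function.Injective pt := by
  intro i j h
  by_contra hne
  have := pt_sep i j hne
  rw [h, dist_self] at this
  norm_num at this

/-- There is a finite set of points in the plane with pairwise distances at
least `1` whose unit-distance graph has chromatic number `4`. -/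
theorem unit_disk_packing_chromatic_four :
    ∃ P : Finset (EuclideanSpace ℝ (Fin 2)),
      (∀ x ∈ P, ∀ y ∈ P, x ≠ y → 1 ≤ dist x y) ∧
      (unitDistanceGraph (P : Set (EuclideanSpace ℝ (Fin 2)))).chromaticNumber = 4 := by
  refine ⟨Finset.univ.map ⟨pt, pt_inj⟩, ?_, ?_⟩
  · intro x hx y hy hxy
    simp only [Finset.mem_map, Finset.mem_univ, true_and, Function.Embedding.coeFn_mk] at hx hy
    obtain ⟨i, rfl⟩ := hx
    obtain ⟨j, rfl⟩ := hy
    exact pt_sep i j (fun h => hxy (by rw [h]))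
  · have hmem : ∀ i, pt i ∈ ((Finset.univ.map ⟨pt, pt_inj⟩ :
        Finset (EuclideanSpace ℝ (Fin 2))) : Set (EuclideanSpace ℝ (Fin 2))) := by
      intro i; simp
    have hex : ∀ x : ((Finset.univ.map ⟨pt, pt_inj⟩ :
        Finset (EuclideanSpace ℝ (Fin 2))) : Set (EuclideanSpace ℝ (Fin 2))),
        ∃ i, pt i = x := by
      rintro ⟨x, hx⟩
      simpa using hx
    choose g hg using hex
    refine (SimpleGraph.chromaticNumber_eq_iff_colorable_not_colorable (n := 3)).2 ⟨?_, ?_⟩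
    · refine ⟨SimpleGraph.Coloring.mk (fun x => ptCol (g x)) ?_⟩
      intro x y hxy
      change dist (x : EuclideanSpace ℝ (Fin 2)) y = 1 at hxy
      rw [← hg x, ← hg y] at hxy
      have hne : g x ≠ g y := by
        intro h
        rw [h, dist_self] at hxy
        norm_num at hxy
      rcases pt_cases _ _ hne with h | h
      · exact h.2.2
      · exact absurd hxy (pt_gt _ _ h.1 h.2).ne'
    · rintro ⟨C⟩
      have key : ∀ i j : Fin 17, dM i j = 36 ∧ dN i j = 0 →
          C ⟨pt i, hmem i⟩ ≠ C ⟨pt j, hmem j⟩ := fun i j h => C.valid (pt_eq i j h.1 h.2)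
      have dia : ∀ a b p q : Fin 17, (dM a b = 36 ∧ dN a b = 0) → (dM p a = 36 ∧ dN p a = 0) →
          (dM p b = 36 ∧ dN p b = 0) → (dM a q = 36 ∧ dN a q = 0) →
          (dM b q = 36 ∧ dN b q = 0) → C ⟨pt p, hmem p⟩ = C ⟨pt q, hmem q⟩ :=
        fun a b p q h1 h2 h3 h4 h5 => diamond _ _ _ _ (key _ _ h1) (key _ _ h2) (key _ _ h3)
          (key _ _ h4) (key _ _ h5)
      have e1 := dia 4 5 0 2 (by decide) (by decide) (by decide) (by decide) (by decide)
      have e2 := dia 8 9 2 13 (by decide) (by decide) (by decide) (by decide) (by decide)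
      have e3 := dia 9 14 13 10 (by decide) (by decide) (by decide) (by decide) (by decide)
      have e4 := dia 11 15 10 16 (by decide) (by decide) (by decide) (by decide) (by decide)
      have e5 := dia 11 12 16 3 (by decide) (by decide) (by decide) (by decide) (by decide)
      have e6 := dia 6 7 3 1 (by decide) (by decide) (by decide) (by decide) (by decide)
      exact key 0 1 (by decide) (by rw [e1, e2, e3, e4, e5, e6])
end
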